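/- arXiv:0902.0132 — 2 statements merged into one kernel-verified Lean document; each statement's English description precedes it below -/
import Mathlib

section
/- Two graphons W and W' satisfy t(F,W) = t(F,W') for every finite simple graph F if and only if W and W' are weakly isomorphic, i.e., there exist a graphon U and Lebesgue-measure-preserving maps φ, φ' : [0,1] → [0,1] such that W(x,y) = U(φ(x),φ(y)) for almost every (x,y) and W'(x,y) = U(φ'(x),φ'(y)) for almost every (x,y). -/
open MeasureTheory Set Filter

/-- The Lebesgue measure restricted to `[0,1]`. -/
noncomputable abbrev μ01 : MeasureTheory.Measure ℝ :=
  MeasureTheory.volume.restrict (Set.Icc (0:ℝ) 1)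

/-- A graphon: a symmetric measurable function `[0,1]² → [0,1]`
(defined on all of `ℝ²` for convenience). -/
def IsGraphon (W : ℝ → ℝ → ℝ) : Prop :=
  Measurable (Function.uncurry W) ∧ (∀ x y, W x y = W y x) ∧ ∀ x y, W x y ∈ Set.Icc (0:ℝ) 1

-- The homomorphism density `t(F,W)` of a finite simple graph `F` in a graphon `W`.
open scoped Classical in
noncomputable def homDensity {n : ℕ} (F : SimpleGraph (Fin n)) (W : ℝ → ℝ → ℝ) : ℝ :=
  ∫ x : Fin n → ℝ,
    (∏ p ∈ Finset.univ.filter (fun p : Fin n × Fin n => p.1 < p.2 ∧ F.Adj p.1 p.2),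
      W (x p.1) (x p.2)) ∂(MeasureTheory.Measure.pi fun _ => μ01)

/-- The cut norm `‖U‖_□` of a kernel `U`. -/
noncomputable def cutNorm (U : ℝ → ℝ → ℝ) : ℝ :=
  sSup { r : ℝ | ∃ S T : Set ℝ, MeasurableSet S ∧ MeasurableSet T ∧
    S ⊆ Set.Icc (0:ℝ) 1 ∧ T ⊆ Set.Icc (0:ℝ) 1 ∧
    r = |∫ x in S, ∫ y in T, U x y| }

/-- An invertible measure preserving map of `[0,1]` onto itself. -/
def IsInvMeasurePreserving (φ : ℝ → ℝ) : Prop :=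
  Set.MapsTo φ (Set.Icc (0:ℝ) 1) (Set.Icc (0:ℝ) 1) ∧
  MeasureTheory.MeasurePreserving φ μ01 μ01 ∧
  ∃ ψ : ℝ → ℝ, Set.MapsTo ψ (Set.Icc (0:ℝ) 1) (Set.Icc (0:ℝ) 1) ∧
    MeasureTheory.MeasurePreserving ψ μ01 μ01 ∧
    (∀ x ∈ Set.Icc (0:ℝ) 1, ψ (φ x) = x) ∧ (∀ x ∈ Set.Icc (0:ℝ) 1, φ (ψ x) = x)

/-- The cut distance `δ_□(U,W)` between two graphons. -/
noncomputable def cutDist (U W : ℝ → ℝ → ℝ) : ℝ :=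
  sInf { r : ℝ | ∃ φ : ℝ → ℝ, IsInvMeasurePreserving φ ∧
    r = cutNorm (fun x y => U x y - W (φ x) (φ y)) }

/-- A (not necessarily invertible) measure preserving map `[0,1] → [0,1]`. -/
def IsMeasurePreservingMap (φ : ℝ → ℝ) : Prop :=
  Set.MapsTo φ (Set.Icc (0:ℝ) 1) (Set.Icc (0:ℝ) 1) ∧
  MeasureTheory.MeasurePreserving φ μ01 μ01



instance instProbMu01 : IsProbabilityMeasure μ01 := by
  constructor; simp

/-- iid uniform variables indexed by `V` -/
noncomputable abbrev piU (V : Type) : Measure (V → ℝ) := Measure.infinitePi (fun _ : V => μ01)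

lemma piU_sum (A B : Type) :
    MeasurePreserving (fun p : (A → ℝ) × (B → ℝ) => (Sum.elim p.1 p.2 : A ⊕ B → ℝ))
      ((piU A).prod (piU B)) (piU (A ⊕ B)) := by
  have hm : Measurable (fun p : (A → ℝ) × (B → ℝ) => (Sum.elim p.1 p.2 : A ⊕ B → ℝ)) := by
    refine measurable_pi_lambda _ ?_
    rintro (a | b)
    · exact (measurable_pi_apply a).comp measurable_fst
    · exact (measurable_pi_apply b).comp measurable_snd
  refine ⟨hm, ?_⟩
  apply Measure.eq_infinitePi
  intro s t ht
  rw [Measure.map_apply hm (MeasurableSet.pi s.countable_toSet (fun i _ => ht i))]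
  have : (fun p : (A → ℝ) × (B → ℝ) => (Sum.elim p.1 p.2 : A ⊕ B → ℝ)) ⁻¹' (Set.pi s t)
      = (Set.pi s.toLeft (fun a => t (Sum.inl a))) ×ˢ (Set.pi s.toRight (fun a => t (Sum.inr a))) := by
    ext p
    simp [Set.mem_pi]
  rw [this, Measure.prod_prod, Measure.infinitePi_pi _ (fun i _ => ht _),
    Measure.infinitePi_pi _ (fun i _ => ht _)]
  conv_rhs => rw [← Finset.toLeft_disjSum_toRight (u := s), Finset.prod_disjSum]

lemma piU_inj {V V' : Type} (c : V → V') (hc : Function.Injective c) :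
    MeasurePreserving (fun (ω : V' → ℝ) (v : V) => ω (c v)) (piU V') (piU V) := by
  classical
  have hm : Measurable (fun (ω : V' → ℝ) (v : V) => ω (c v)) := by fun_prop
  refine ⟨hm, ?_⟩
  apply Measure.eq_infinitePi
  intro s t ht
  rw [Measure.map_apply hm (MeasurableSet.pi s.countable_toSet (fun i _ => ht i))]
  have : (fun (ω : V' → ℝ) (v : V) => ω (c v)) ⁻¹' (Set.pi s t)
      = Set.pi (s.map ⟨c, hc⟩ : Finset V') (Function.extend c t (fun _ => univ)) := by
    ext p
    simp [Set.mem_pi, hc.extend_apply]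
  rw [this, Measure.infinitePi_pi]
  · simp [hc.extend_apply]
  · intro i hi
    simp only [Finset.mem_map, Function.Embedding.coeFn_mk] at hi
    obtain ⟨v, -, rfl⟩ := hi
    rw [hc.extend_apply]; exact ht v

lemma IsGraphon.meas {W : ℝ → ℝ → ℝ} (hW : IsGraphon W) {α : Type*} [MeasurableSpace α]
    {f g : α → ℝ} (hf : Measurable f) (hg : Measurable g) :
    Measurable (fun x => W (f x) (g x)) :=
  hW.1.comp (hf.prodMk hg)

lemma IsGraphon.prod_mem {W : ℝ → ℝ → ℝ} (hW : IsGraphon W) {ι : Type*} (s : Finset ι)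
    (f g : ι → ℝ) : ∏ e ∈ s, W (f e) (g e) ∈ Icc (0:ℝ) 1 :=
  ⟨Finset.prod_nonneg fun _ _ => (hW.2.2 _ _).1,
    Finset.prod_le_one (fun _ _ => (hW.2.2 _ _).1) (fun _ _ => (hW.2.2 _ _).2)⟩

/-- Bounded measurable functions are integrable. -/
lemma integrable_of_mem_Icc {α : Type*} [MeasurableSpace α] {μ : Measure α} [IsFiniteMeasure μ]
    {f : α → ℝ} (hf : Measurable f) (h : ∀ x, f x ∈ Icc (0:ℝ) 1) : Integrable f μ := by
  refine Integrable.of_bound hf.aestronglyMeasurable 1 (ae_of_all _ fun x => ?_)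
  rw [Real.norm_eq_abs, abs_of_nonneg (h x).1]; exact (h x).2

lemma integral_mem_Icc {α : Type*} [MeasurableSpace α] {μ : Measure α} [IsProbabilityMeasure μ]
    {f : α → ℝ} (hf : Measurable f) (h : ∀ x, f x ∈ Icc (0:ℝ) 1) : ∫ x, f x ∂μ ∈ Icc (0:ℝ) 1 := by
  refine ⟨integral_nonneg fun x => (h x).1, ?_⟩
  calc ∫ x, f x ∂μ ≤ ∫ x, (1:ℝ) ∂μ :=
        integral_mono (integrable_of_mem_Icc hf h) (integrable_const _) fun x => (h x).2
    _ = 1 := by simp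

open scoped Classical in
lemma td_eq_homDensity {V ι : Type} [Fintype ι] (s t : ι → V) (hne : ∀ e, s e ≠ t e)
    (hinj : Function.Injective (fun e => s(s e, t e))) :
    ∃ (n : ℕ) (F : SimpleGraph (Fin n)), ∀ W, IsGraphon W →
      ∫ ω, ∏ e, W (ω (s e)) (ω (t e)) ∂(piU V) = homDensity F W := by
  let T : Finset V := Finset.univ.image s ∪ Finset.univ.image t
  let eqv := T.equivFin
  let c : Fin T.card → V := fun i => (eqv.symm i : V)
  have hc : Function.Injective c := Subtype.val_injective.comp eqv.symm.injective
  have hs : ∀ e, s e ∈ T := fun e => by simp [T]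
  have ht : ∀ e, t e ∈ T := fun e => by simp [T]
  let s' : ι → Fin T.card := fun e => eqv ⟨s e, hs e⟩
  let t' : ι → Fin T.card := fun e => eqv ⟨t e, ht e⟩
  have hs' : ∀ e, c (s' e) = s e := fun e => by simp [c, s']
  have ht' : ∀ e, c (t' e) = t e := fun e => by simp [c, t']
  have hne' : ∀ e, s' e ≠ t' e := fun e h => hne e (by rw [← hs', ← ht', h])
  have hinj' : ∀ e e', s(s' e, t' e) = s(s' e', t' e') → e = e' := by
    intro e e' h
    apply hinj
    have := congrArg (Sym2.map c) h
    simpa [Sym2.map_mk, hs', ht'] using this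
  let F : SimpleGraph (Fin T.card) := SimpleGraph.fromEdgeSet (Set.range fun e => s(s' e, t' e))
  refine ⟨T.card, F, fun W hW => ?_⟩
  have key : ∀ x : Fin T.card → ℝ,
      ∏ p ∈ Finset.univ.filter (fun p : Fin T.card × Fin T.card => p.1 < p.2 ∧ F.Adj p.1 p.2),
      W (x p.1) (x p.2) = ∏ e, W (x (s' e)) (x (t' e)) := by
    intro x
    symm
    refine Finset.prod_bij (fun e _ => (min (s' e) (t' e), max (s' e) (t' e))) ?_ ?_ ?_ ?_
    · intro e _
      simp only [Finset.mem_filter, Finset.mem_univ, true_and]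
      refine ⟨by simpa using (hne' e).symm, ?_⟩
      rw [SimpleGraph.fromEdgeSet_adj]
      refine ⟨⟨e, ?_⟩, ?_⟩
      · rcases le_total (s' e) (t' e) with h | h
        · simp [h]
        · simp [h, Sym2.eq_swap]
      · have := hne' e
        rcases le_total (s' e) (t' e) with h | h
        · simpa [h] using this
        · simpa [h] using this.symm
    · intro e _ e' _ h
      apply hinj'
      simp only [Prod.mk.injEq] at h
      rcases le_total (s' e) (t' e) with h1 | h1 <;> rcases le_total (s' e') (t' e') with h2 | h2 <;>
        simp [h1, h2] at h <;> rw [h.1, h.2] <;> exact Sym2.eq_swap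
    · rintro ⟨u, v⟩ h
      simp only [Finset.mem_filter, Finset.mem_univ, true_and] at h
      obtain ⟨huv, hadj⟩ := h
      rw [SimpleGraph.fromEdgeSet_adj] at hadj
      obtain ⟨⟨e, he⟩, -⟩ := hadj
      refine ⟨e, Finset.mem_univ _, ?_⟩
      simp only [Sym2.eq_iff] at he
      rcases he with ⟨h1, h2⟩ | ⟨h1, h2⟩
      · simp [h1, h2, huv.le]
      · simp [h1, h2, huv.le]
    · intro e _
      rcases le_total (s' e) (t' e) with h | h
      · simp [h]
      · simp [h, hW.2.1 (x (s' e))]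
  have hd : homDensity F W = ∫ x, ∏ e, W (x (s' e)) (x (t' e)) ∂(Measure.pi fun _ => μ01) := by
    unfold homDensity
    refine integral_congr_ae (ae_of_all _ fun x => ?_)
    refine Eq.trans ?_ (key x)
    refine Finset.prod_congr ?_ fun _ _ => rfl
    ext p; simp
  rw [hd, ← Measure.infinitePi_eq_pi]
  have hmp := piU_inj c hc
  change _ = ∫ x, ∏ e, W (x (s' e)) (x (t' e)) ∂(piU (Fin T.card))
  rw [← hmp.map_eq, integral_map hmp.measurable.aemeasurable]
  · simp only [hs', ht']
  · refine Measurable.aestronglyMeasurable ?_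
    exact Finset.measurable_prod _ fun e _ => hW.meas (measurable_pi_apply _) (measurable_pi_apply _)


/-- Rooted simple graphs, all of whose edges have an internal endpoint. -/
structure RG (ρ : Type) where
  X : Type
  ι : Type
  fin : Fintype ι
  s : ι → X
  t : ι → ρ ⊕ X
  ne : ∀ e, (Sum.inr (s e) : ρ ⊕ X) ≠ t e
  inj : ∀ e e', s((Sum.inr (s e) : ρ ⊕ X), t e) = s((Sum.inr (s e') : ρ ⊕ X), t e') → e = e'

attribute [instance] RG.fin

namespace RG
variable {ρ : Type}

noncomputable def eval (R : RG ρ) (W : ℝ → ℝ → ℝ) (a : ρ → ℝ) : ℝ :=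
  ∫ z, ∏ e, W (z (R.s e)) (Sum.elim a z (R.t e)) ∂(piU R.X)

lemma meas_elim {A B : Type} (x : A ⊕ B) :
    Measurable (fun p : (A → ℝ) × (B → ℝ) => Sum.elim p.1 p.2 x) :=
  (measurable_pi_apply x).comp (piU_sum A B).measurable

lemma meas_integrand (R : RG ρ) {W : ℝ → ℝ → ℝ} (hW : IsGraphon W) :
    Measurable (fun p : (ρ → ℝ) × (R.X → ℝ) =>
      ∏ e, W (p.2 (R.s e)) (Sum.elim p.1 p.2 (R.t e))) :=
  Finset.measurable_prod _ fun _ _ =>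
    hW.meas ((measurable_pi_apply _).comp measurable_snd) (meas_elim _)

lemma measurable_eval (R : RG ρ) {W : ℝ → ℝ → ℝ} (hW : IsGraphon W) : Measurable (R.eval W) :=
  (((R.meas_integrand hW).stronglyMeasurable).integral_prod_right (ν := piU R.X)).measurable

lemma eval_mem (R : RG ρ) {W : ℝ → ℝ → ℝ} (hW : IsGraphon W) (a : ρ → ℝ) :
    R.eval W a ∈ Icc (0:ℝ) 1 :=
  integral_mem_Icc ((R.meas_integrand hW).comp measurable_prodMk_left)
    fun _ => hW.prod_mem _ _ _

lemma integral_eval (R : RG ρ) {W : ℝ → ℝ → ℝ} (hW : IsGraphon W) :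
    ∫ a, R.eval W a ∂(piU ρ) =
      ∫ ω, ∏ e, W (ω (Sum.inr (R.s e))) (ω (R.t e)) ∂(piU (ρ ⊕ R.X)) := by
  have hmp := piU_sum ρ R.X
  rw [← hmp.map_eq, integral_map hmp.measurable.aemeasurable]
  · rw [integral_prod]
    · rfl
    · exact integrable_of_mem_Icc (R.meas_integrand hW) fun _ => hW.prod_mem _ _ _
  · exact (Finset.measurable_prod _ fun e _ =>
      hW.meas (measurable_pi_apply _) (measurable_pi_apply _)).aestronglyMeasurable

lemma integral_eval_eq (R : RG ρ) {W W' : ℝ → ℝ → ℝ} (hW : IsGraphon W) (hW' : IsGraphon W')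
    (H : ∀ (n : ℕ) (F : SimpleGraph (Fin n)), homDensity F W = homDensity F W') :
    ∫ a, R.eval W a ∂(piU ρ) = ∫ a, R.eval W' a ∂(piU ρ) := by
  obtain ⟨n, F, hF⟩ := td_eq_homDensity (fun e => (Sum.inr (R.s e) : ρ ⊕ R.X)) R.t R.ne
    (fun e e' h => R.inj e e' h)
  rw [integral_eval R hW, integral_eval R hW', hF W hW, hF W' hW', H]

def one : RG ρ where
  X := Empty
  ι := Empty
  fin := inferInstance
  s := fun e => e
  t := fun e => e.elim
  ne := fun e => e.elim
  inj := fun e => e.elim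

lemma eval_one (W : ℝ → ℝ → ℝ) (a : ρ → ℝ) : (one : RG ρ).eval W a = 1 := by
  unfold eval one
  simp

def mulT {A B C : Type} : A ⊕ B → A ⊕ (B ⊕ C) := Sum.map id Sum.inl
def mulT' {A B C : Type} : A ⊕ C → A ⊕ (B ⊕ C) := Sum.map id Sum.inr

lemma mulT_inj {A B C : Type} : Function.Injective (mulT : A ⊕ B → A ⊕ (B ⊕ C)) :=
  Function.Injective.sumMap Function.injective_id Sum.inl_injective
lemma mulT'_inj {A B C : Type} : Function.Injective (mulT' : A ⊕ C → A ⊕ (B ⊕ C)) :=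
  Function.Injective.sumMap Function.injective_id Sum.inr_injective

def mul (R S : RG ρ) : RG ρ where
  X := R.X ⊕ S.X
  ι := R.ι ⊕ S.ι
  fin := inferInstance
  s := Sum.map R.s S.s
  t := Sum.elim (fun e => mulT (R.t e)) (fun e => mulT' (S.t e))
  ne := by
    rintro (e | e) h
    · exact R.ne e (mulT_inj (C := S.X) h)
    · exact S.ne e (mulT'_inj (B := R.X) h)
  inj := by
    rintro (e | e) (e' | e') h
    · congr 1
      refine R.inj e e' ?_
      exact Sym2.map.injective (mulT_inj (C := S.X)) h
    · exfalso
      simp only [Sum.map_inl, Sum.map_inr, Sum.elim_inl, Sum.elim_inr, Sym2.eq_iff] at h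
      rcases h with ⟨h, -⟩ | ⟨h, -⟩
      · simp at h
      · rcases hh : S.t e' with x | x <;> simp [hh, mulT'] at h
    · exfalso
      simp only [Sum.map_inl, Sum.map_inr, Sum.elim_inl, Sum.elim_inr, Sym2.eq_iff] at h
      rcases h with ⟨h, -⟩ | ⟨h, -⟩
      · simp at h
      · rcases hh : R.t e' with x | x <;> simp [hh, mulT] at h
    · congr 1
      refine S.inj e e' ?_
      exact Sym2.map.injective (mulT'_inj (B := R.X)) h

lemma elim_mulT {A B C : Type} (a : A → ℝ) (b : B → ℝ) (c : C → ℝ) (x : A ⊕ B) :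
    Sum.elim a (Sum.elim b c) (mulT x) = Sum.elim a b x := by
  rcases x with x | x <;> rfl
lemma elim_mulT' {A B C : Type} (a : A → ℝ) (b : B → ℝ) (c : C → ℝ) (x : A ⊕ C) :
    Sum.elim a (Sum.elim b c) (mulT' x) = Sum.elim a c x := by
  rcases x with x | x <;> rfl

lemma eval_mul (R S : RG ρ) {W : ℝ → ℝ → ℝ} (hW : IsGraphon W) (a : ρ → ℝ) :
    (R.mul S).eval W a = R.eval W a * S.eval W a := by
  unfold eval
  rw [← integral_prod_mul]
  have hmp := piU_sum R.X S.X
  change ∫ z : R.X ⊕ S.X → ℝ, _ ∂(piU (R.X ⊕ S.X)) = _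
  rw [← hmp.map_eq, integral_map hmp.measurable.aemeasurable]
  · refine integral_congr_ae (ae_of_all _ fun p => ?_)
    change ∏ e : R.ι ⊕ S.ι, _ = _
    rw [Fintype.prod_sum_type]
    simp only [mul, Sum.map_inl, Sum.map_inr, Sum.elim_inl, Sum.elim_inr, elim_mulT, elim_mulT']
  · exact (((R.mul S).meas_integrand hW).comp measurable_prodMk_left).aestronglyMeasurable

/-- The path of length two between the two different roots. -/
def path (r r' : ρ) (h : r ≠ r') : RG ρ where
  X := Unit
  ι := Bool
  fin := inferInstance
  s := fun _ => ()
  t := fun b => Sum.inl (if b then r else r')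
  ne := by intro e h; simp at h
  inj := by
    intro e e' hh
    cases e <;> cases e' <;> simp_all

/-- `K = W ∘ W` -/
noncomputable def _root_.sqK (W : ℝ → ℝ → ℝ) (x y : ℝ) : ℝ := ∫ b, W b x * W b y ∂μ01

lemma eval_path (r r' : ρ) (h : r ≠ r') {W : ℝ → ℝ → ℝ} (hW : IsGraphon W) (a : ρ → ℝ) :
    (path r r' h).eval W a = sqK W (a r) (a r') := by
  unfold eval sqK
  have hmp := measurePreserving_eval_infinitePi (fun _ : Unit => μ01) ()
  change ∫ z : Unit → ℝ, _ ∂(piU Unit) = _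
  conv_rhs => rw [← hmp.map_eq]
  rw [integral_map hmp.measurable.aemeasurable]
  · refine integral_congr_ae (ae_of_all _ fun p => ?_)
    change ∏ e : Bool, _ = _
    simp [path]
  · exact ((hW.meas measurable_id measurable_const).mul
      (hW.meas measurable_id measurable_const)).aestronglyMeasurable

/-- Multiply paths along a word. -/
def word : List (ℕ × Bool) → RG (ℕ ⊕ Bool)
  | [] => one
  | p :: w => mul (path (Sum.inl p.1) (Sum.inr p.2) (by simp)) (word w)

lemma eval_word (w : List (ℕ × Bool)) {W : ℝ → ℝ → ℝ} (hW : IsGraphon W) (a : ℕ ⊕ Bool → ℝ) :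
    (word w).eval W a =
      (w.map fun p => sqK W (a (Sum.inl p.1)) (a (Sum.inr p.2))).prod := by
  induction w with
  | nil => simp [word, eval_one]
  | cons p w ih => simp [word, eval_mul _ _ hW, ih, eval_path _ _ _ hW]

def closeT {X : Type} : (ℕ ⊕ Bool) ⊕ X → ℕ ⊕ (Bool ⊕ X) := Equiv.sumAssoc _ _ _

lemma closeT_inj {X : Type} : Function.Injective (closeT (X := X)) := (Equiv.sumAssoc _ _ _).injective

/-- Turn the roots in `Bool` to internal vertices, adding `k` edges between them. -/
def close (k : Bool) (R : RG (ℕ ⊕ Bool)) : RG ℕ where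
  X := Bool ⊕ R.X
  ι := R.ι ⊕ {b : Bool // b = true ∧ k = true}
  fin := inferInstance
  s := Sum.elim (fun e => Sum.inr (R.s e)) (fun _ => Sum.inl false)
  t := Sum.elim (fun e => closeT (R.t e)) (fun _ => Sum.inr (Sum.inl true))
  ne := by
    rintro (e | e) h
    · exact R.ne e (closeT_inj h)
    · simp at h
  inj := by
    rintro (e | e) (e' | e') h
    · congr 1
      refine R.inj e e' ?_
      exact Sym2.map.injective closeT_inj h
    · simp at h
    · simp at h
    · congr 1
      exact Subtype.ext (e.2.1.trans e'.2.1.symm)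

lemma elim_closeT {X : Type} (a : ℕ → ℝ) (b : Bool → ℝ) (c : X → ℝ) (x : (ℕ ⊕ Bool) ⊕ X) :
    Sum.elim a (Sum.elim b c) (closeT x) = Sum.elim (Sum.elim a b) c x := by
  rcases x with (x | x) | x <;> rfl

lemma eval_close (k : Bool) (R : RG (ℕ ⊕ Bool)) {W : ℝ → ℝ → ℝ} (hW : IsGraphon W) (a : ℕ → ℝ) :
    (R.close k).eval W a =
      ∫ ω, (if k then W (ω false) (ω true) else 1) * R.eval W (Sum.elim a ω) ∂(piU Bool) := by
  have hmp := piU_sum Bool R.X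
  have hm := ((R.close k).meas_integrand hW).comp
    (measurable_prodMk_left (x := a) (β := (R.close k).X → ℝ))
  have key : ∀ p : (Bool → ℝ) × (R.X → ℝ),
      ∏ e, W (Sum.elim p.1 p.2 ((R.close k).s e))
        (Sum.elim a (Sum.elim p.1 p.2) ((R.close k).t e)) =
      (if k then W (p.1 false) (p.1 true) else 1) *
        ∏ e, W (p.2 (R.s e)) (Sum.elim (Sum.elim a p.1) p.2 (R.t e)) := by
    intro p
    change ∏ e : R.ι ⊕ {b : Bool // b = true ∧ k = true}, _ = _
    rw [Fintype.prod_sum_type, mul_comm]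
    simp only [close, Sum.elim_inl, Sum.elim_inr, elim_closeT]
    congr 1
    cases k
    · simp
    · simp
  have step : (R.close k).eval W a = ∫ p : (Bool → ℝ) × (R.X → ℝ),
      ∏ e, W (Sum.elim p.1 p.2 ((R.close k).s e))
        (Sum.elim a (Sum.elim p.1 p.2) ((R.close k).t e)) ∂((piU Bool).prod (piU R.X)) := by
    unfold eval
    change ∫ z : Bool ⊕ R.X → ℝ, _ ∂(piU (Bool ⊕ R.X)) = _
    rw [← hmp.map_eq, integral_map hmp.measurable.aemeasurable]
    · rfl
    · exact hm.aestronglyMeasurable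
  rw [step, integral_prod]
  · refine integral_congr_ae (ae_of_all _ fun ω => ?_)
    refine (integral_congr_ae (ae_of_all _ fun y => key (ω, y))).trans ?_
    dsimp only
    rw [integral_const_mul]
    rfl
  · exact integrable_of_mem_Icc (hm.comp hmp.measurable) fun _ => hW.prod_mem _ _ _

end RG


/-- coordinate as bounded continuous function -/
noncomputable def coordBCF {I : Type} (i : I) : BoundedContinuousFunction (I → unitInterval) ℝ :=
  BoundedContinuousFunction.mkOfCompact ⟨fun z => (z i : ℝ), by fun_prop⟩

lemma moment_ext {I : Type} [Countable I] {P P' : Measure (I → unitInterval)}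
    [IsFiniteMeasure P] [IsFiniteMeasure P']
    (h : ∀ w : List I, ∫ z, (w.map fun i => (z i : ℝ)).prod ∂P
      = ∫ z, (w.map fun i => (z i : ℝ)).prod ∂P') : P = P' := by
  let A : StarSubalgebra ℝ (BoundedContinuousFunction (I → unitInterval) ℝ) :=
    StarAlgebra.adjoin ℝ (Set.range coordBCF)
  refine ext_of_forall_mem_subalgebra_integral_eq_of_polish (𝕜 := ℝ) (A := A) ?_ ?_
  · intro x y hxy
    obtain ⟨i, hi⟩ := Function.ne_iff.mp hxy
    refine ⟨fun z => (z i : ℝ), ?_, fun h => hi (Subtype.ext h)⟩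
    refine ⟨_, ⟨coordBCF i, StarAlgebra.subset_adjoin ℝ _ ⟨i, rfl⟩, rfl⟩, rfl⟩
  · intro g hg
    have hg' : g ∈ Submodule.span ℝ (Submonoid.closure (Set.range (coordBCF (I := I))) :
        Set (BoundedContinuousFunction (I → unitInterval) ℝ)) := by
      have h1 : g ∈ (StarAlgebra.adjoin ℝ (Set.range (coordBCF (I := I)))).toSubalgebra := hg
      have hst : star (Set.range (coordBCF (I := I))) = Set.range (coordBCF (I := I)) := by
        ext f
        simp only [Set.mem_star, Set.mem_range]
        have : star f = f := by ext z; simp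
        rw [this]
      rw [StarAlgebra.adjoin_toSubalgebra, hst, Set.union_self, ← Subalgebra.mem_toSubmodule,
        Algebra.adjoin_eq_span] at h1
      exact h1
    clear hg
    induction hg' using Submodule.span_induction with
    | mem x hx =>
      obtain ⟨l, hl, rfl⟩ := Submonoid.exists_list_of_mem_closure hx
      have : ∃ w : List I, l = w.map coordBCF := by
        clear hx
        induction l with
        | nil => exact ⟨[], rfl⟩
        | cons f l ih =>
          obtain ⟨w, hw⟩ := ih (fun y hy => hl y (List.mem_cons_of_mem _ hy))
          obtain ⟨i, hi⟩ := hl f List.mem_cons_self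
          exact ⟨i :: w, by simp [hw, hi]⟩
      obtain ⟨w, rfl⟩ := this
      have hz : ∀ z : I → unitInterval, ((w.map coordBCF).prod : BoundedContinuousFunction _ ℝ) z
          = (w.map fun i => (z i : ℝ)).prod := by
        intro z
        clear hx hl
        induction w with
        | nil => simp
        | cons i w ih => simp [ih]; left; rfl
      simp_rw [hz]
      exact h w
    | zero => simp
    | add x y hx hy ihx ihy =>
      simp only [BoundedContinuousFunction.coe_add, Pi.add_apply]
      rw [integral_add (x.integrable _) (y.integrable _),
        integral_add (x.integrable _) (y.integrable _), ihx, ihy]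
    | smul c x hx ih =>
      simp only [BoundedContinuousFunction.coe_smul]
      rw [integral_smul, integral_smul, ih]


section
variable {W : ℝ → ℝ → ℝ}

lemma measurable_sqK (hW : IsGraphon W) : Measurable (fun p : ℝ × ℝ => sqK W p.1 p.2) := by
  have : Measurable (fun q : (ℝ × ℝ) × ℝ => W q.2 q.1.1 * W q.2 q.1.2) :=
    (hW.meas (by fun_prop) (by fun_prop)).mul (hW.meas (by fun_prop) (by fun_prop))
  exact (this.stronglyMeasurable.integral_prod_right (ν := μ01)).measurable

lemma sqK_mem (hW : IsGraphon W) (x y : ℝ) : sqK W x y ∈ Icc (0:ℝ) 1 := by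
  refine integral_mem_Icc ((hW.meas (by fun_prop) (by fun_prop)).mul
    (hW.meas (by fun_prop) (by fun_prop))) fun b => ?_
  have h1 := hW.2.2 b x
  have h2 := hW.2.2 b y
  exact ⟨mul_nonneg h1.1 h2.1, mul_le_one₀ h1.2 h2.1 h2.2⟩

/-- A sequence of anchors is good if it detects the kernel of the operator given by `sqK W`. -/
def GoodSeq (W : ℝ → ℝ → ℝ) (a : ℕ → ℝ) : Prop :=
  ∀ h : ℝ → ℝ, Measurable h → (∀ x, |h x| ≤ 1) → (∀ i, ∫ x, h x * sqK W (a i) x ∂μ01 = 0) →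
    ∀ᵐ y ∂μ01, ∫ x, h x * sqK W y x ∂μ01 = 0

lemma ae_hit {S : Set ℝ} (hS : MeasurableSet S) (h0 : μ01 S ≠ 0) :
    ∀ᵐ a ∂(piU ℕ), ∃ i, a i ∈ S := by
  rw [ae_iff]
  have hlt : μ01 Sᶜ < 1 := by
    rw [prob_compl_eq_one_sub hS]
    exact ENNReal.sub_lt_self ENNReal.one_ne_top one_ne_zero h0
  have hle : ∀ n : ℕ, piU ℕ {a | ¬ ∃ i, a i ∈ S} ≤ (μ01 Sᶜ) ^ n := by
    intro n
    calc piU ℕ {a | ¬ ∃ i, a i ∈ S} ≤ piU ℕ (Set.pi (Finset.range n) (fun _ => Sᶜ)) := by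
          apply measure_mono
          intro a ha i _
          simp only [mem_ofPred_eq, not_exists] at ha
          exact ha i
      _ = (μ01 Sᶜ) ^ n := by
          rw [Measure.infinitePi_pi _ (fun _ _ => hS.compl)]; simp
  exact le_antisymm (ge_of_tendsto' (ENNReal.tendsto_pow_atTop_nhds_zero_of_lt_one hlt) hle) bot_le

lemma goodSeq_ae (hW : IsGraphon W) : ∀ᵐ a ∂(piU ℕ), GoodSeq W a := by
  haveI : Fact ((1 : ENNReal) ≠ ⊤) := ⟨ENNReal.one_ne_top⟩
  haveI : SecondCountableTopology (Lp ℝ 1 μ01) := Lp.SecondCountableTopology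
  let c : ℕ → Lp ℝ 1 μ01 := TopologicalSpace.denseSeq (Lp ℝ 1 μ01)
  have hK := measurable_sqK hW
  have hKy : ∀ y, Measurable (fun x => sqK W y x) := fun y => hK.comp measurable_prodMk_left
  have hKi : ∀ y, Integrable (fun x => sqK W y x) μ01 := fun y =>
    integrable_of_mem_Icc (hKy y) fun x => sqK_mem hW y x
  have hci : ∀ n, Integrable (c n) μ01 := fun n => L1.integrable_coeFn (c n)
  let d : ℕ → ℝ → ℝ := fun n y => ∫ x, |sqK W y x - c n x| ∂μ01
  have hd : ∀ n, Measurable (d n) := by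
    intro n
    have hc : Measurable (c n) := (Lp.stronglyMeasurable (c n)).measurable
    have : Measurable (fun q : ℝ × ℝ => |sqK W q.1 q.2 - c n q.2|) :=
      (hK.sub (hc.comp measurable_snd)).abs
    exact (this.stronglyMeasurable.integral_prod_right (ν := μ01)).measurable
  let B : ℕ → ℕ → Set ℝ := fun n m => {y | d n y < 1 / ((m : ℝ) + 1)}
  have hB : ∀ n m, MeasurableSet (B n m) := fun n m => measurableSet_lt (hd n) measurable_const
  have h1 : ∀ᵐ a ∂(piU ℕ), ∀ n m, μ01 (B n m) ≠ 0 → ∃ i, a i ∈ B n m := by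
    rw [ae_all_iff]; intro n; rw [ae_all_iff]; intro m
    by_cases h0 : μ01 (B n m) = 0
    · exact ae_of_all _ fun a h => absurd h0 h
    · filter_upwards [ae_hit (hB n m) h0] with a ha _ using ha
  have h2 : ∀ᵐ y ∂μ01, ∀ n m, y ∈ B n m → μ01 (B n m) ≠ 0 := by
    rw [ae_all_iff]; intro n; rw [ae_all_iff]; intro m
    by_cases h0 : μ01 (B n m) = 0
    · have : ∀ᵐ y ∂μ01, y ∉ B n m := measure_eq_zero_iff_ae_notMem.mp h0
      filter_upwards [this] with y hy h using absurd h hy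
    · exact ae_of_all _ fun _ _ => h0
  filter_upwards [h1] with a ha
  intro h hh hb hz
  filter_upwards [h2] with y hy
  have main : ∀ m : ℕ, |∫ x, h x * sqK W y x ∂μ01| ≤ 2 * (1 / ((m : ℝ) + 1)) := by
    intro m
    have hpos : (0:ℝ) < 1 / ((m : ℝ) + 1) := by positivity
    obtain ⟨n, hn⟩ : ∃ n, y ∈ B n m := by
      have hdr := (TopologicalSpace.denseRange_denseSeq (Lp ℝ 1 μ01)).exists_dist_lt
        ((hKi y).toL1 _) hpos
      obtain ⟨n, hn⟩ := hdr
      refine ⟨n, ?_⟩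
      rw [L1.dist_eq_integral_dist] at hn
      change ∫ x, |sqK W y x - c n x| ∂μ01 < _
      refine lt_of_eq_of_lt (integral_congr_ae ?_) hn
      filter_upwards [(hKi y).coeFn_toL1] with x hx
      rw [hx, Real.dist_eq]
    obtain ⟨i, hi⟩ := ha n m (hy n m hn)
    have hmul : ∀ z, Integrable (fun x => h x * sqK W z x) μ01 := fun z =>
      (hKi z).bdd_mul hh.aestronglyMeasurable (ae_of_all _ fun x => by simpa using hb x)
    have e1 : ∫ x, h x * sqK W y x ∂μ01 = ∫ x, h x * (sqK W y x - sqK W (a i) x) ∂μ01 := by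
      simp_rw [mul_sub]
      rw [integral_sub (hmul y) (hmul (a i)), hz i, sub_zero]
    rw [e1]
    have i1 : Integrable (fun x => |sqK W y x - c n x|) μ01 := ((hKi y).sub (hci n)).abs
    have i2 : Integrable (fun x => |sqK W (a i) x - c n x|) μ01 := ((hKi _).sub (hci n)).abs
    calc |∫ x, h x * (sqK W y x - sqK W (a i) x) ∂μ01|
        ≤ ∫ x, |h x * (sqK W y x - sqK W (a i) x)| ∂μ01 := abs_integral_le_integral_abs
      _ ≤ ∫ x, (|sqK W y x - c n x| + |sqK W (a i) x - c n x|) ∂μ01 := by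
          refine integral_mono ?_ (i1.add i2) fun x => ?_
          · exact (((hKi y).sub (hKi (a i))).bdd_mul hh.aestronglyMeasurable
              (ae_of_all _ fun x => by simpa using hb x)).abs
          · simp only [abs_mul]
            calc |h x| * |sqK W y x - sqK W (a i) x| ≤ 1 * |sqK W y x - sqK W (a i) x| := by
                  gcongr; exact hb x
              _ ≤ _ := by
                  rw [one_mul]
                  have := abs_sub_le (sqK W y x) (c n x) (sqK W (a i) x)
                  rwa [abs_sub_comm (c n x)] at this
      _ = d n y + d n (a i) := integral_add i1 i2
      _ ≤ 2 * (1 / ((m : ℝ) + 1)) := by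
          have : d n y < 1 / ((m : ℝ) + 1) := hn
          have : d n (a i) < 1 / ((m : ℝ) + 1) := hi
          linarith
  have hlim : Tendsto (fun m : ℕ => 2 * (1 / ((m : ℝ) + 1))) atTop (nhds (2 * 0)) :=
    tendsto_one_div_add_atTop_nhds_zero_nat.const_mul 2
  have := ge_of_tendsto' hlim main
  rw [mul_zero] at this
  exact abs_eq_zero.mp (le_antisymm this (abs_nonneg _))

/-- If `h` is in the kernel of `sqK W` it is in the kernel of `W`. -/
lemma kernel_of_sqK (hW : IsGraphon W) {h : ℝ → ℝ} (hh : Measurable h) (hb : ∀ x, |h x| ≤ 1)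
    (hz : ∀ᵐ y ∂μ01, ∫ x, h x * sqK W y x ∂μ01 = 0) :
    ∀ᵐ b ∂μ01, ∫ x, h x * W b x ∂μ01 = 0 := by
  let T : ℝ → ℝ := fun b => ∫ x, h x * W b x ∂μ01
  have hbW : ∀ b x, |h x * W b x| ≤ 1 := by
    intro b x
    have := hW.2.2 b x
    rw [abs_mul]
    exact mul_le_one₀ (hb x) (abs_nonneg _) (by rw [abs_of_nonneg this.1]; exact this.2)
  have hTm : Measurable T := by
    have : Measurable (fun q : ℝ × ℝ => h q.2 * W q.1 q.2) :=
      (hh.comp measurable_snd).mul (hW.meas measurable_fst measurable_snd)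
    exact (this.stronglyMeasurable.integral_prod_right (ν := μ01)).measurable
  have hTb : ∀ b, |T b| ≤ 1 := by
    intro b
    have := norm_integral_le_of_norm_le_const (μ := μ01) (f := fun x => h x * W b x) (C := 1)
      (ae_of_all _ fun x => hbW b x)
    simpa using this
  have hsq : ∫ b, T b * T b ∂μ01 = 0 := by
    -- T b * T b = ∫ (x,y) h x W b x h y W b y
    let f : ℝ × ℝ × ℝ → ℝ := fun q => h q.2.1 * W q.1 q.2.1 * (h q.2.2 * W q.1 q.2.2)
    have hfm : Measurable f := by
      refine Measurable.mul ?_ ?_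
      · exact (hh.comp (by fun_prop)).mul (hW.meas (by fun_prop) (by fun_prop))
      · exact (hh.comp (by fun_prop)).mul (hW.meas (by fun_prop) (by fun_prop))
    have hfi : Integrable f (μ01.prod (μ01.prod μ01)) := by
      refine Integrable.of_bound hfm.aestronglyMeasurable 1 (ae_of_all _ fun q => ?_)
      rw [Real.norm_eq_abs, abs_mul]
      exact mul_le_one₀ (hbW _ _) (abs_nonneg _) (hbW _ _)
    have e1 : ∀ b, T b * T b = ∫ p, f (b, p) ∂(μ01.prod μ01) := fun b =>
      (integral_prod_mul (fun x => h x * W b x) (fun y => h y * W b y)).symm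
    simp_rw [e1]
    rw [integral_integral_swap (f := fun b p => f (b, p)) hfi]
    have e2 : ∀ p : ℝ × ℝ, ∫ b, f (b, p) ∂μ01 = h p.1 * (h p.2 * sqK W p.1 p.2) := by
      intro p
      unfold sqK
      rw [← integral_const_mul, ← integral_const_mul]
      refine integral_congr_ae (ae_of_all _ fun b => ?_)
      simp only [f]; ring
    simp_rw [e2]
    rw [integral_prod]
    · refine integral_eq_zero_of_ae ?_
      filter_upwards [hz] with y hy
      simp only [integral_const_mul, hy, mul_zero, Pi.zero_apply]
    · refine Integrable.of_bound (Measurable.aestronglyMeasurable ?_) 1 (ae_of_all _ fun q => ?_)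
      · exact (hh.comp measurable_fst).mul ((hh.comp measurable_snd).mul (measurable_sqK hW))
      · rw [Real.norm_eq_abs, abs_mul, abs_mul]
        have := sqK_mem hW q.1 q.2
        refine mul_le_one₀ (hb _) (by positivity) (mul_le_one₀ (hb _) (abs_nonneg _) ?_)
        rw [abs_of_nonneg this.1]; exact this.2
  rw [integral_eq_zero_iff_of_nonneg (fun b => mul_self_nonneg _)] at hsq
  · filter_upwards [hsq] with b hb'
    exact mul_self_eq_zero.mp hb'
  · refine Integrable.of_bound (hTm.mul hTm).aestronglyMeasurable 1 (ae_of_all _ fun q => ?_)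
    rw [Real.norm_eq_abs, abs_mul]
    exact mul_le_one₀ (hTb _) (abs_nonneg _) (hTb _)

end


lemma exists_condexp_factor {α β : Type} [mα : MeasurableSpace α] [mβ : MeasurableSpace β]
    (μ : Measure α) [IsFiniteMeasure μ] {T : α → β} (hT : Measurable T) {g : α → ℝ}
    (hg : Measurable g) (hg1 : ∀ x, g x ∈ Icc (0:ℝ) 1) :
    ∃ G : β → ℝ, Measurable G ∧ (∀ y, G y ∈ Icc (0:ℝ) 1) ∧
      ∀ f : β → ℝ, Measurable f → (∀ y, |f y| ≤ 1) →
        ∫ x, G (T x) * f (T x) ∂μ = ∫ x, g x * f (T x) ∂μ := by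
  have hm : mβ.comap T ≤ mα := hT.comap_le
  have hgi : Integrable g μ := integrable_of_mem_Icc hg hg1
  obtain ⟨G0, hG0, hG0e⟩ :=
    (stronglyMeasurable_condExp (m := mβ.comap T) (μ := μ) (f := g)).exists_eq_measurable_comp
  refine ⟨fun y => max 0 (min 1 (G0 y)), measurable_const.max (measurable_const.min
    hG0.measurable), fun y => ⟨le_max_left _ _, max_le zero_le_one (min_le_left _ _)⟩, ?_⟩
  intro f hf hfb
  have h0 : 0 ≤ᵐ[μ] μ[g | mβ.comap T] := condExp_nonneg (ae_of_all _ fun x => (hg1 x).1)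
  have h1 : μ[g | mβ.comap T] ≤ᵐ[μ] fun _ => (1:ℝ) := by
    have := condExp_mono (m := mβ.comap T) (μ := μ) hgi (integrable_const (1:ℝ))
      (ae_of_all _ fun x => (hg1 x).2)
    rwa [condExp_const hm] at this
  have hfT : StronglyMeasurable[mβ.comap T] (fun x => f (T x)) :=
    (hf.comp (comap_measurable T)).stronglyMeasurable
  have hfi : Integrable (g * fun x => f (T x)) μ :=
    hgi.mul_bdd (hf.comp hT).aestronglyMeasurable (ae_of_all _ fun x => by simpa using hfb (T x))
  have h2 := condExp_mul_of_stronglyMeasurable_right hfT hfi hgi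
  calc ∫ x, max 0 (min 1 (G0 (T x))) * f (T x) ∂μ
      = ∫ x, (μ[g | mβ.comap T] * fun x => f (T x)) x ∂μ := by
        refine integral_congr_ae ?_
        filter_upwards [h0, h1] with x hx0 hx1
        have : (μ[g | mβ.comap T]) x = G0 (T x) := congrFun hG0e x
        simp only [Pi.mul_apply, this] at hx0 hx1 ⊢
        have hx0r : (0:ℝ) ≤ G0 (T x) := hx0
        rw [min_eq_right hx1, max_eq_right hx0r]
    _ = ∫ x, (μ[g * fun x => f (T x) | mβ.comap T]) x ∂μ := integral_congr_ae h2.symm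
    _ = ∫ x, g x * f (T x) ∂μ := integral_condExp hm

lemma ae_zero_of_rect {M : ℝ × ℝ → ℝ} (hM : Integrable M (μ01.prod μ01))
    (h : ∀ S T : Set ℝ, MeasurableSet S → MeasurableSet T →
      ∫ p in S ×ˢ T, M p ∂(μ01.prod μ01) = 0) : M =ᵐ[μ01.prod μ01] 0 := by
  refine hM.ae_eq_zero_of_forall_setIntegral_eq_zero ?_
  intro C hC hfin
  clear hfin
  induction C, hC using MeasurableSpace.induction_on_inter
    (s := image2 (· ×ˢ ·) {s : Set ℝ | MeasurableSet s} {t : Set ℝ | MeasurableSet t})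
    generateFrom_prod.symm isPiSystem_prod with
  | empty => simp
  | basic C hC =>
    obtain ⟨S, hS, T, hT, rfl⟩ := hC
    exact h S T hS hT
  | compl C hC ih =>
    have h1 := integral_add_compl hC hM
    have h2 := h univ univ MeasurableSet.univ MeasurableSet.univ
    rw [univ_prod_univ, setIntegral_univ] at h2
    linarith
  | iUnion f hd hf ih =>
    rw [integral_iUnion hf hd hM.integrableOn]
    simp [ih]

section
variable {W : ℝ → ℝ → ℝ}

/-- The anchored map. -/
noncomputable def anch (hW : IsGraphon W) (a : ℕ → ℝ) (x : ℝ) : ℕ → unitInterval :=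
  fun i => ⟨sqK W (a i) x, sqK_mem hW _ _⟩

lemma measurable_anch (hW : IsGraphon W) (a : ℕ → ℝ) : Measurable (anch hW a) := by
  refine measurable_pi_lambda _ fun i => Measurable.subtype_mk ?_
  exact (measurable_sqK hW).comp (measurable_const.prodMk measurable_id)

/-- Merge two points. -/
def joinU (u v : ℕ → unitInterval) : ℕ × Bool → unitInterval :=
  fun q => if q.2 then v q.1 else u q.1

lemma measurable_joinU :
    Measurable (fun p : (ℕ → unitInterval) × (ℕ → unitInterval) => joinU p.1 p.2) := by
  refine measurable_pi_lambda _ ?_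
  rintro ⟨i, b⟩
  cases b
  · exact (measurable_pi_apply i).comp measurable_fst
  · exact (measurable_pi_apply i).comp measurable_snd

lemma measurable_anch2 (hW : IsGraphon W) (a : ℕ → ℝ) :
    Measurable (fun p : ℝ × ℝ => joinU (anch hW a p.1) (anch hW a p.2)) :=
  measurable_joinU.comp (((measurable_anch hW a).comp measurable_fst).prodMk
    ((measurable_anch hW a).comp measurable_snd))

lemma integral_kernel_zero {M : ℝ × ℝ → ℝ} (hM : Measurable M) (hMb : ∀ p, |M p| ≤ 1)
    {h u : ℝ → ℝ} (hh : Measurable h) (hhb : ∀ x, |h x| ≤ 1) (hu : Measurable u)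
    (hub : ∀ x, |u x| ≤ 1) (hz : ∀ᵐ y ∂μ01, ∫ x, h x * M (x, y) ∂μ01 = 0) :
    ∫ p, h p.1 * u p.2 * M p ∂(μ01.prod μ01) = 0 := by
  rw [integral_prod_symm]
  · refine integral_eq_zero_of_ae ?_
    filter_upwards [hz] with y hy
    have : ∀ x, h x * u y * M (x, y) = u y * (h x * M (x, y)) := fun x => by ring
    simp only [this, integral_const_mul, hy, mul_zero, Pi.zero_apply]
  · refine Integrable.of_bound (Measurable.aestronglyMeasurable ?_) 1 (ae_of_all _ fun q => ?_)
    · exact ((hh.comp measurable_fst).mul (hu.comp measurable_snd)).mul hM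
    · rw [Real.norm_eq_abs, abs_mul, abs_mul]
      exact mul_le_one₀ (mul_le_one₀ (hhb _) (abs_nonneg _) (hub _)) (abs_nonneg _) (hMb _)

lemma integral_kernel_zero' {M : ℝ × ℝ → ℝ} (hM : Measurable M) (hMb : ∀ p, |M p| ≤ 1)
    {h u : ℝ → ℝ} (hh : Measurable h) (hhb : ∀ x, |h x| ≤ 1) (hu : Measurable u)
    (hub : ∀ x, |u x| ≤ 1) (hz : ∀ᵐ x ∂μ01, ∫ y, h y * M (x, y) ∂μ01 = 0) :
    ∫ p, u p.1 * h p.2 * M p ∂(μ01.prod μ01) = 0 := by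
  have := integral_kernel_zero (hM.comp measurable_swap) (fun p => hMb p.swap) hh hhb hu hub hz
  rw [← integral_prod_swap] at this
  rw [← this]
  refine integral_congr_ae (ae_of_all _ fun p => ?_)
  simp [mul_comm]

lemma exists_factor (hW : IsGraphon W) {a : ℕ → ℝ} (ha : GoodSeq W a) :
    ∃ V : (ℕ × Bool → unitInterval) → ℝ, Measurable V ∧ (∀ z, V z ∈ Icc (0:ℝ) 1) ∧
      ∀ᵐ p ∂(μ01.prod μ01), W p.1 p.2 = V (joinU (anch hW a p.1) (anch hW a p.2)) := by
  have hΦ := measurable_anch hW a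
  have hΨ := measurable_anch2 hW a
  obtain ⟨V, hV, hV1, hVf⟩ := exists_condexp_factor (μ01.prod μ01) hΨ
    (g := fun p => W p.1 p.2) hW.1 (fun p => hW.2.2 _ _)
  refine ⟨V, hV, hV1, ?_⟩
  set M : ℝ × ℝ → ℝ := fun p => W p.1 p.2 - V (joinU (anch hW a p.1) (anch hW a p.2)) with hMdef
  have hM : Measurable M := Measurable.sub hW.1 (hV.comp hΨ)
  have hMb : ∀ p, |M p| ≤ 1 := by
    intro p
    have h1 := hW.2.2 p.1 p.2
    have h2 := hV1 (joinU (anch hW a p.1) (anch hW a p.2))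
    simp only [hMdef]
    rw [abs_le]; constructor <;> linarith [h1.1, h1.2, h2.1, h2.2]
  have hMi : Integrable M (μ01.prod μ01) :=
    Integrable.of_bound hM.aestronglyMeasurable 1 (ae_of_all _ fun q => hMb q)
  suffices hz : M =ᵐ[μ01.prod μ01] 0 by
    filter_upwards [hz] with p hp
    exact sub_eq_zero.mp hp
  refine ae_zero_of_rect hMi ?_
  -- conditional expectation of an indicator
  have hce : ∀ S : Set ℝ, MeasurableSet S → ∃ G : (ℕ → unitInterval) → ℝ, Measurable G ∧
      (∀ y, G y ∈ Icc (0:ℝ) 1) ∧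
      (∀ᵐ y ∂μ01, ∫ x, (S.indicator 1 x - G (anch hW a x)) * M (x, y) ∂μ01 = 0) ∧
      (∀ᵐ x ∂μ01, ∫ y, (S.indicator 1 y - G (anch hW a y)) * M (x, y) ∂μ01 = 0) := by
    intro S hS
    have hind1 : ∀ x, S.indicator (1 : ℝ → ℝ) x ∈ Icc (0:ℝ) 1 := by
      intro x
      by_cases hx : x ∈ S <;> simp [hx]
    have hindm : Measurable (S.indicator (1 : ℝ → ℝ)) := measurable_one.indicator hS
    obtain ⟨G, hG, hG1, hGf⟩ := exists_condexp_factor μ01 hΦ hindm hind1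
    set h : ℝ → ℝ := fun x => S.indicator 1 x - G (anch hW a x) with hdef
    have hm : Measurable h := hindm.sub (hG.comp hΦ)
    have hb : ∀ x, |h x| ≤ 1 := by
      intro x
      have h1 := hind1 x
      have h2 := hG1 (anch hW a x)
      simp only [hdef]
      rw [abs_le]; constructor <;> linarith [h1.1, h1.2, h2.1, h2.2]
    have hbi : ∀ f : ℝ → ℝ, Measurable f → (∀ x, |f x| ≤ 1) → ∀ g : ℝ → ℝ, Measurable g →
        (∀ x, |g x| ≤ 1) → Integrable (fun x => f x * g x) μ01 := by
      intro f hf hf1 g hg hg1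
      refine Integrable.of_bound (hf.mul hg).aestronglyMeasurable 1 (ae_of_all _ fun q => ?_)
      rw [Real.norm_eq_abs, abs_mul]
      exact mul_le_one₀ (hf1 _) (abs_nonneg _) (hg1 _)
    have habs : ∀ {t : ℝ}, t ∈ Icc (0:ℝ) 1 → |t| ≤ 1 := fun ht => by
      rw [abs_of_nonneg ht.1]; exact ht.2
    have horth : ∀ f : (ℕ → unitInterval) → ℝ, Measurable f → (∀ y, |f y| ≤ 1) →
        ∫ x, h x * f (anch hW a x) ∂μ01 = 0 := by
      intro f hf hf1
      simp only [hdef, sub_mul]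
      rw [integral_sub, hGf f hf hf1, sub_self]
      · exact hbi _ hindm (fun x => habs (hind1 x)) _ (hf.comp hΦ) fun x => hf1 _
      · exact hbi _ (hG.comp hΦ) (fun x => habs (hG1 _)) _ (hf.comp hΦ) fun x => hf1 _
    have hker := kernel_of_sqK hW hm hb (ha h hm hb fun i => by
      refine horth (fun z => (z i : ℝ)) (by fun_prop) (fun z => habs (z i).2))
    have hj1 : ∀ v, Measurable fun z : ℕ → unitInterval => joinU z v := fun v =>
      measurable_joinU.comp (g := fun p : (ℕ → unitInterval) × (ℕ → unitInterval) =>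
        joinU p.1 p.2) (f := fun z => (z, v)) (measurable_id.prodMk measurable_const)
    have hj2 : ∀ v, Measurable fun z : ℕ → unitInterval => joinU v z := fun v =>
      measurable_joinU.comp (g := fun p : (ℕ → unitInterval) × (ℕ → unitInterval) =>
        joinU p.1 p.2) (f := fun z => (v, z)) (measurable_const.prodMk measurable_id)
    have hVz1 : ∀ y, ∫ x, h x * V (joinU (anch hW a x) (anch hW a y)) ∂μ01 = 0 := fun y =>
      horth (fun z => V (joinU z (anch hW a y)))
        (hV.comp (hj1 _))
        (fun z => habs (hV1 _))
    have hVz2 : ∀ y, ∫ x, h x * V (joinU (anch hW a y) (anch hW a x)) ∂μ01 = 0 := fun y =>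
      horth (fun z => V (joinU (anch hW a y) z))
        (hV.comp (hj2 _))
        (fun z => habs (hV1 _))
    refine ⟨G, hG, hG1, ?_, ?_⟩
    · filter_upwards [hker] with y hy
      simp only [hMdef, mul_sub]
      rw [integral_sub]
      · rw [hVz1 y, sub_zero, ← hy]
        refine integral_congr_ae (ae_of_all _ fun x => ?_)
        simp only [hdef, hW.2.1 x y]
      · exact hbi _ hm hb _ (hW.meas measurable_id measurable_const) fun x => habs (hW.2.2 _ _)
      · exact hbi _ hm hb _ (hV.comp (hΨ.comp (measurable_id.prodMk measurable_const)))
          fun x => habs (hV1 _)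
    · filter_upwards [hker] with y hy
      simp only [hMdef, mul_sub]
      rw [integral_sub]
      · rw [hVz2 y, sub_zero, ← hy]
      · exact hbi _ hm hb _ (hW.meas measurable_const measurable_id) fun x => habs (hW.2.2 _ _)
      · exact hbi _ hm hb _ (hV.comp (hΨ.comp (measurable_const.prodMk measurable_id)))
          fun x => habs (hV1 _)
  intro S T hS hT
  obtain ⟨G, hG, hG1, hGz, -⟩ := hce S hS
  obtain ⟨G', hG', hG1', -, hGz'⟩ := hce T hT
  have habs : ∀ {t : ℝ}, t ∈ Icc (0:ℝ) 1 → |t| ≤ 1 := fun ht => by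
    rw [abs_of_nonneg ht.1]; exact ht.2
  have hind1 : ∀ (S : Set ℝ) x, S.indicator (1 : ℝ → ℝ) x ∈ Icc (0:ℝ) 1 := by
    intro S x
    by_cases hx : x ∈ S <;> simp [hx]
  have hdiff : ∀ {s t : ℝ}, s ∈ Icc (0:ℝ) 1 → t ∈ Icc (0:ℝ) 1 → |s - t| ≤ 1 := by
    intro s t h1 h2
    rw [abs_le]; constructor <;> linarith [h1.1, h1.2, h2.1, h2.2]
  have hSm : Measurable (S.indicator (1 : ℝ → ℝ)) := measurable_one.indicator hS
  have hTm : Measurable (T.indicator (1 : ℝ → ℝ)) := measurable_one.indicator hT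
  have z1 := integral_kernel_zero hM hMb (hSm.sub (hG.comp hΦ))
    (fun x => hdiff (hind1 S x) (hG1 _)) hTm (fun x => habs (hind1 T x)) hGz
  have z2 := integral_kernel_zero' hM hMb (hTm.sub (hG'.comp hΦ))
    (fun x => hdiff (hind1 T x) (hG1' _)) (hG.comp hΦ) (fun x => habs (hG1 _)) hGz'
  have hbb : ∀ f g : ℝ → ℝ, Measurable f → Measurable g → (∀ x, |f x| ≤ 1) → (∀ x, |g x| ≤ 1) →
      ∀ N : ℝ × ℝ → ℝ, Measurable N → (∀ p, |N p| ≤ 1) →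
      Integrable (fun p : ℝ × ℝ => f p.1 * g p.2 * N p) (μ01.prod μ01) := by
    intro f g hf hg hf1 hg1 N hN hN1
    refine Integrable.of_bound (Measurable.aestronglyMeasurable ?_) 1 (ae_of_all _ fun q => ?_)
    · exact ((hf.comp measurable_fst).mul (hg.comp measurable_snd)).mul hN
    · rw [Real.norm_eq_abs, abs_mul, abs_mul]
      exact mul_le_one₀ (mul_le_one₀ (hf1 _) (abs_nonneg _) (hg1 _)) (abs_nonneg _) (hN1 _)
  have z3 : ∫ p : ℝ × ℝ, G (anch hW a p.1) * G' (anch hW a p.2) * M p ∂(μ01.prod μ01) = 0 := by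
    have := hVf (fun z => G (fun i => z (i, false)) * G' (fun i => z (i, true)))
      ((hG.comp (measurable_pi_lambda _ fun i => measurable_pi_apply (i, false))).mul
        (hG'.comp (measurable_pi_lambda _ fun i => measurable_pi_apply (i, true))))
      (fun z => by
        rw [abs_mul]
        exact mul_le_one₀ (habs (hG1 _)) (abs_nonneg _) (habs (hG1' _)))
    simp only [joinU, Bool.false_eq_true, if_false, if_true] at this
    simp only [hMdef, mul_sub]
    rw [integral_sub]
    · rw [sub_eq_zero]
      refine Eq.trans ?_ (this.symm.trans ?_)
      · refine integral_congr_ae (ae_of_all _ fun p => ?_)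
        exact mul_comm _ _
      · refine integral_congr_ae (ae_of_all _ fun p => ?_)
        exact mul_comm _ _
    · exact hbb _ _ (hG.comp hΦ) (hG'.comp hΦ) (fun x => habs (hG1 _)) (fun x => habs (hG1' _))
        _ hW.1 (fun p => habs (hW.2.2 _ _))
    · exact hbb _ _ (hG.comp hΦ) (hG'.comp hΦ) (fun x => habs (hG1 _)) (fun x => habs (hG1' _))
        _ (hV.comp hΨ) (fun p => habs (hV1 _))
  rw [← integral_indicator (hS.prod hT)]
  have hsum : ∀ p : ℝ × ℝ, (S ×ˢ T).indicator M p =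
      ((S.indicator 1 p.1 - G (anch hW a p.1)) * T.indicator 1 p.2 * M p +
      G (anch hW a p.1) * (T.indicator 1 p.2 - G' (anch hW a p.2)) * M p) +
      G (anch hW a p.1) * G' (anch hW a p.2) * M p := by
    rintro ⟨x, y⟩
    by_cases hx : x ∈ S <;> by_cases hy : y ∈ T <;> simp [hx, hy] <;> ring
  simp_rw [hsum]
  have i1 := hbb _ _ (hSm.sub (hG.comp hΦ)) hTm
    (fun x => hdiff (hind1 S x) (hG1 _)) (fun x => habs (hind1 T x)) M hM hMb
  have i2 := hbb _ _ (hG.comp hΦ) (hTm.sub (hG'.comp hΦ)) (fun x => habs (hG1 _))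
    (fun x => hdiff (hind1 T x) (hG1' _)) M hM hMb
  have i3 := hbb _ _ (hG.comp hΦ) (hG'.comp hΦ) (fun x => habs (hG1 _)) (fun x => habs (hG1' _))
    M hM hMb
  have e1 := integral_add (i1.add i2) i3
  have e2 := integral_add i1 i2
  simp only [Pi.add_apply, Pi.sub_apply, Function.comp_apply] at e1 e2 z1 z2
  rw [e1, e2, z1, z2, z3]
  simp

end


/-- The data of a sequence of anchors. -/
noncomputable def dat {W : ℝ → ℝ → ℝ} (hW : IsGraphon W) (a : ℕ → ℝ) :
    Bool × List (ℕ × Bool) → unitInterval :=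
  fun p => ⟨(RG.close p.1 (RG.word p.2)).eval W a, RG.eval_mem _ hW a⟩

lemma measurable_dat {W : ℝ → ℝ → ℝ} (hW : IsGraphon W) : Measurable (dat hW) :=
  measurable_pi_lambda _ fun _ => Measurable.subtype_mk (RG.measurable_eval _ hW)

/-- product of a list of rooted graphs -/
def RG.lprod : List (Bool × List (ℕ × Bool)) → RG ℕ
  | [] => RG.one
  | p :: l => RG.mul (RG.close p.1 (RG.word p.2)) (RG.lprod l)

lemma RG.eval_lprod {W : ℝ → ℝ → ℝ} (hW : IsGraphon W) (a : ℕ → ℝ)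
    (l : List (Bool × List (ℕ × Bool))) :
    (RG.lprod l).eval W a = (l.map fun p => (dat hW a p : ℝ)).prod := by
  induction l with
  | nil => simp [RG.lprod, RG.eval_one]
  | cons p l ih => simp [RG.lprod, RG.eval_mul _ _ hW, ih, dat]

lemma measurable_mono {I : Type} (w : List I) :
    Measurable (fun z : I → unitInterval => (w.map fun i => (z i : ℝ)).prod) := by
  induction w with
  | nil => simp
  | cons i w ih =>
    simp only [List.map_cons, List.prod_cons]
    exact Measurable.mul (by fun_prop) ih

section
variable {W W' : ℝ → ℝ → ℝ}

lemma map_dat_eq (hW : IsGraphon W) (hW' : IsGraphon W')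
    (H : ∀ (n : ℕ) (F : SimpleGraph (Fin n)), homDensity F W = homDensity F W') :
    (piU ℕ).map (dat hW) = (piU ℕ).map (dat hW') := by
  refine moment_ext fun w => ?_
  rw [integral_map (measurable_dat hW).aemeasurable (measurable_mono w).aestronglyMeasurable,
    integral_map (measurable_dat hW').aemeasurable (measurable_mono w).aestronglyMeasurable]
  simp only [← RG.eval_lprod]
  exact RG.integral_eval_eq _ hW hW' H

lemma exists_meas_subset {p : (ℕ → ℝ) → Prop} (h : ∀ᵐ a ∂(piU ℕ), p a) :
    ∃ S : Set (ℕ → ℝ), (∀ a ∈ S, p a) ∧ MeasurableSet S ∧ piU ℕ Sᶜ = 0 := by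
  obtain ⟨t, ht, htm, ht0⟩ := exists_measurable_superset_of_null (ae_iff.1 h)
  refine ⟨tᶜ, fun a ha => ?_, htm.compl, by rwa [compl_compl]⟩
  by_contra hc
  exact ha (ht hc)

lemma exists_match (hW : IsGraphon W) (hW' : IsGraphon W')
    (H : ∀ (n : ℕ) (F : SimpleGraph (Fin n)), homDensity F W = homDensity F W') :
    ∃ a a', GoodSeq W a ∧ GoodSeq W' a' ∧ dat hW a = dat hW' a' := by
  obtain ⟨S, hSs, hS, hS0⟩ := exists_meas_subset (goodSeq_ae hW)
  obtain ⟨S', hSs', hS', hS0'⟩ := exists_meas_subset (goodSeq_ae hW')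
  by_contra hcon
  push Not at hcon
  have hd : Disjoint (dat hW '' S) (dat hW' '' S') := by
    rw [Set.disjoint_left]
    rintro _ ⟨a, ha, rfl⟩ ⟨a', ha', he⟩
    exact hcon a a' (hSs a ha) (hSs' a' ha') he.symm
  obtain ⟨u, hu1, hu2, hu⟩ := (hS.analyticSet_image (measurable_dat hW)).measurablySeparable
    (hS'.analyticSet_image (measurable_dat hW')) hd
  have h1 : (piU ℕ).map (dat hW) u = 1 := by
    rw [Measure.map_apply (measurable_dat hW) hu]
    rw [prob_compl_eq_zero_iff hS] at hS0
    refine le_antisymm prob_le_one ?_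
    rw [← hS0]
    exact measure_mono fun a ha => hu1 ⟨a, ha, rfl⟩
  have h2 : (piU ℕ).map (dat hW') u = 0 := by
    rw [Measure.map_apply (measurable_dat hW') hu]
    have hsub : dat hW' ⁻¹' u ⊆ S'ᶜ := fun a ha hc => Set.disjoint_left.1 hu2 ⟨a, hc, rfl⟩ ha
    exact measure_mono_null hsub hS0'
  rw [map_dat_eq hW hW' H, h2] at h1
  simp at h1
end


lemma piU_bool : MeasurePreserving (fun ω : Bool → ℝ => (ω false, ω true)) (piU Bool)
    (μ01.prod μ01) := by
  have hm : Measurable (fun ω : Bool → ℝ => (ω false, ω true)) := by fun_prop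
  refine ⟨hm, ?_⟩
  symm
  refine Measure.prod_eq fun s t hs ht => ?_
  rw [Measure.map_apply hm (hs.prod ht)]
  unfold piU
  rw [Measure.infinitePi_eq_pi]
  have : (fun ω : Bool → ℝ => (ω false, ω true)) ⁻¹' s ×ˢ t
      = Set.univ.pi (fun b : Bool => if b then t else s) := by
    ext ω
    simp [Set.mem_pi, and_comm]
  rw [this, Measure.pi_pi]
  simp [mul_comm]

section
variable {W W' : ℝ → ℝ → ℝ}

/-- the pair of anchored maps -/
noncomputable def anch2 (hW : IsGraphon W) (a : ℕ → ℝ) (p : ℝ × ℝ) : ℕ × Bool → unitInterval :=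
  joinU (anch hW a p.1) (anch hW a p.2)

lemma dat_eq (hW : IsGraphon W) (a : ℕ → ℝ) (k : Bool) (w : List (ℕ × Bool)) :
    (dat hW a (k, w) : ℝ) = ∫ p, (if k then W p.1 p.2 else 1) *
      (w.map fun i => (anch2 hW a p i : ℝ)).prod ∂(μ01.prod μ01) := by
  have hm : Measurable (fun p : ℝ × ℝ => (if k then W p.1 p.2 else 1) *
      (w.map fun i => (anch2 hW a p i : ℝ)).prod) := by
    refine Measurable.mul ?_ ((measurable_mono w).comp (measurable_anch2 hW a))
    cases k
    · simp
    · exact hW.1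
  rw [← piU_bool.map_eq, integral_map piU_bool.measurable.aemeasurable hm.aestronglyMeasurable]
  change (RG.close k (RG.word w)).eval W a = _
  rw [RG.eval_close k _ hW]
  refine integral_congr_ae (ae_of_all _ fun ω => ?_)
  simp only [RG.eval_word _ hW, Sum.elim_inl, Sum.elim_inr]
  congr 2
  refine List.map_congr_left fun q _ => ?_
  obtain ⟨i, b⟩ := q
  cases b <;> rfl

lemma law_eq (hW : IsGraphon W) (hW' : IsGraphon W') {a a' : ℕ → ℝ}
    (h : dat hW a = dat hW' a') :
    (μ01.prod μ01).map (anch2 hW a) = (μ01.prod μ01).map (anch2 hW' a') := by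
  refine moment_ext fun w => ?_
  have hm : Measurable (anch2 hW a) := measurable_anch2 hW a
  have hm' : Measurable (anch2 hW' a') := measurable_anch2 hW' a'
  rw [integral_map hm.aemeasurable (measurable_mono w).aestronglyMeasurable,
    integral_map hm'.aemeasurable (measurable_mono w).aestronglyMeasurable]
  have := congrArg (Subtype.val) (congrFun h (false, w))
  rw [dat_eq, dat_eq] at this
  simpa using this

lemma instFinWD (hW : IsGraphon W) : IsFiniteMeasure
    ((μ01.prod μ01).withDensity fun p => ENNReal.ofReal (W p.1 p.2)) := by
  refine isFiniteMeasure_withDensity_ofReal ?_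
  exact (integrable_of_mem_Icc hW.1 fun p => hW.2.2 _ _).2

lemma law_eq1 (hW : IsGraphon W) (hW' : IsGraphon W') {a a' : ℕ → ℝ}
    (h : dat hW a = dat hW' a') :
    ((μ01.prod μ01).withDensity fun p => ENNReal.ofReal (W p.1 p.2)).map (anch2 hW a) =
    ((μ01.prod μ01).withDensity fun p => ENNReal.ofReal (W' p.1 p.2)).map (anch2 hW' a') := by
  have := instFinWD hW
  have := instFinWD hW'
  refine moment_ext fun w => ?_
  have hm : Measurable (anch2 hW a) := measurable_anch2 hW a
  have hm' : Measurable (anch2 hW' a') := measurable_anch2 hW' a'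
  rw [integral_map hm.aemeasurable (measurable_mono w).aestronglyMeasurable,
    integral_map hm'.aemeasurable (measurable_mono w).aestronglyMeasurable]
  have := congrArg (Subtype.val) (congrFun h (true, w))
  rw [dat_eq, dat_eq] at this
  have hd : Measurable fun p : ℝ × ℝ => ENNReal.ofReal (W p.1 p.2) := hW.1.ennreal_ofReal
  have hd' : Measurable fun p : ℝ × ℝ => ENNReal.ofReal (W' p.1 p.2) := hW'.1.ennreal_ofReal
  rw [integral_withDensity_eq_integral_toReal_smul hd (by simp),
    integral_withDensity_eq_integral_toReal_smul hd' (by simp)]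
  simpa [ENNReal.toReal_ofReal (hW.2.2 _ _).1, ENNReal.toReal_ofReal (hW'.2.2 _ _).1] using this

lemma map_wd (hW : IsGraphon W) {a : ℕ → ℝ} {V : (ℕ × Bool → unitInterval) → ℝ}
    (hV : Measurable V) (hWV : ∀ᵐ p ∂(μ01.prod μ01), W p.1 p.2 = V (anch2 hW a p)) :
    ((μ01.prod μ01).withDensity fun p => ENNReal.ofReal (W p.1 p.2)).map (anch2 hW a) =
    ((μ01.prod μ01).map (anch2 hW a)).withDensity fun z => ENNReal.ofReal (V z) := by
  have hm : Measurable (anch2 hW a) := measurable_anch2 hW a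
  ext C hC
  rw [Measure.map_apply hm hC, withDensity_apply _ (hm hC), withDensity_apply _ hC,
    setLIntegral_map hC hV.ennreal_ofReal hm]
  refine lintegral_congr_ae (ae_restrict_of_ae ?_)
  filter_upwards [hWV] with p hp
  rw [hp]

/-- common factorization through the anchored maps. -/
lemma exists_common (hW : IsGraphon W) (hW' : IsGraphon W')
    (H : ∀ (n : ℕ) (F : SimpleGraph (Fin n)), homDensity F W = homDensity F W') :
    ∃ (V : (ℕ × Bool → unitInterval) → ℝ) (f f' : ℝ → ℕ → unitInterval), Measurable V ∧
      (∀ z, V z ∈ Icc (0:ℝ) 1) ∧ Measurable f ∧ Measurable f' ∧ μ01.map f = μ01.map f' ∧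
      (∀ᵐ p ∂(μ01.prod μ01), W p.1 p.2 = V (joinU (f p.1) (f p.2))) ∧
      (∀ᵐ p ∂(μ01.prod μ01), W' p.1 p.2 = V (joinU (f' p.1) (f' p.2))) := by
  obtain ⟨a, a', ha, ha', hd⟩ := exists_match hW hW' H
  obtain ⟨V, hV, hV1, hWV⟩ := exists_factor hW ha
  obtain ⟨V', hV', hV1', hWV'⟩ := exists_factor hW' ha'
  have hm : Measurable (anch2 hW a) := measurable_anch2 hW a
  have hm' : Measurable (anch2 hW' a') := measurable_anch2 hW' a'
  have hl := law_eq hW hW' hd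
  refine ⟨V, anch hW a, anch hW' a', hV, hV1, measurable_anch _ _, measurable_anch _ _, ?_, hWV, ?_⟩
  · have hp : Measurable (fun (z : ℕ × Bool → unitInterval) (i : ℕ) => z (i, false)) := by fun_prop
    have key : ∀ {W : ℝ → ℝ → ℝ} (hW : IsGraphon W) (a : ℕ → ℝ), μ01.map (anch hW a) =
        ((μ01.prod μ01).map (anch2 hW a)).map (fun z i => z (i, false)) := by
      intro W hW a
      have hm : Measurable (anch2 hW a) := measurable_anch2 hW a
      rw [Measure.map_map hp hm]
      have : ((fun (z : ℕ × Bool → unitInterval) (i : ℕ) => z (i, false)) ∘ anch2 hW a)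
          = anch hW a ∘ Prod.fst := by
        funext p i
        rfl
      rw [this, ← Measure.map_map (measurable_anch hW a) measurable_fst]
      congr 1
      exact (measurePreserving_fst (μ := μ01) (ν := μ01)).map_eq.symm
    rw [key, key, hl]
  · have h1 := law_eq1 hW hW' hd
    rw [map_wd hW hV hWV, map_wd hW' hV' hWV', hl] at h1
    rw [withDensity_eq_iff_of_sigmaFinite hV.ennreal_ofReal.aemeasurable hV'.ennreal_ofReal.aemeasurable] at h1
    have h2 := ae_of_ae_map hm'.aemeasurable h1
    filter_upwards [h2, hWV'] with p hp hp'
    rw [hp']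
    have := congrArg ENNReal.toReal hp
    rw [ENNReal.toReal_ofReal (hV1 _).1, ENNReal.toReal_ofReal (hV1' _).1] at this
    exact this.symm
end


/-- lexicographic order on the graph of `g` -/
def lexR (g : ℝ → ℝ) (y x : ℝ) : Prop := g y < g x ∨ (g y = g x ∧ y < x)

/-- the rank function -/
noncomputable def rankF (g : ℝ → ℝ) (x : ℝ) : ℝ := μ01.real {y | lexR g y x}

section
variable {g : ℝ → ℝ}

lemma lexR_trans {x y z : ℝ} (h : lexR g x y) (h' : lexR g y z) : lexR g x z := by
  unfold lexR at *
  grind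

lemma lexR_asymm {x y : ℝ} (h : lexR g x y) (h' : lexR g y x) : False := by
  unfold lexR at *
  grind

lemma lexR_tri (x y : ℝ) : lexR g x y ∨ x = y ∨ lexR g y x := by
  unfold lexR
  grind

lemma measurableSet_lexR (hg : Measurable g) : MeasurableSet {p : ℝ × ℝ | lexR g p.1 p.2} := by
  have h1 : Measurable fun p : ℝ × ℝ => g p.1 := hg.comp measurable_fst
  have h2 : Measurable fun p : ℝ × ℝ => g p.2 := hg.comp measurable_snd
  exact (measurableSet_lt h1 h2).union
    ((measurableSet_eq_fun h1 h2).inter (measurableSet_lt measurable_fst measurable_snd))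

lemma measurableSet_lexR' (hg : Measurable g) (x : ℝ) : MeasurableSet {y | lexR g y x} :=
  measurable_prodMk_right (measurableSet_lexR hg)

lemma measurable_rankF (hg : Measurable g) : Measurable (rankF g) :=
  (measurable_measure_prodMk_right (μ := μ01) (measurableSet_lexR hg)).ennreal_toReal

lemma rankF_mem (x : ℝ) : rankF g x ∈ Icc (0:ℝ) 1 := ⟨measureReal_nonneg, measureReal_le_one⟩

lemma rankF_mono {x y : ℝ} (h : lexR g y x) : rankF g y ≤ rankF g x :=
  measureReal_mono fun _ hz => lexR_trans hz h

lemma lexR_of_lt {x y : ℝ} (h : rankF g y < rankF g x) : lexR g y x := by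
  rcases lexR_tri (g := g) x y with h1 | h1 | h1
  · exact absurd (rankF_mono h1) (not_le.2 h)
  · subst h1; exact absurd h (lt_irrefl _)
  · exact h1

lemma null_of_full (hg : Measurable g) {L : Set ℝ} (hL : MeasurableSet L)
    (h : ∀ y ∈ L, μ01 (L \ {z | lexR g z y}) = 0) : μ01 L = 0 := by
  have hR := measurableSet_lexR hg
  have h1 : (μ01.prod μ01) ((L ×ˢ L) \ {p : ℝ × ℝ | lexR g p.1 p.2}) = 0 := by
    rw [Measure.prod_apply_symm ((hL.prod hL).diff hR)]
    refine (lintegral_congr fun y => ?_).trans lintegral_zero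
    by_cases hy : y ∈ L
    · refine measure_mono_null ?_ (h y hy)
      rintro z ⟨hz, hz'⟩
      exact ⟨hz.1, hz'⟩
    · refine measure_mono_null ?_ measure_empty
      rintro z ⟨hz, hz'⟩
      exact hy hz.2
  have h2 : (μ01.prod μ01) ((L ×ˢ L) \ {p : ℝ × ℝ | lexR g p.2 p.1}) = 0 := by
    have := (Measure.measurePreserving_swap (μ := μ01) (ν := μ01)).measure_preimage
      ((hL.prod hL).diff hR).nullMeasurableSet
    rw [h1] at this
    rw [← this]
    congr 1
    ext ⟨x, y⟩
    simp [and_comm]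
  have h3 : (μ01.prod μ01) (L ×ˢ L) = 0 := by
    refine measure_mono_null ?_ (measure_union_null h1 h2)
    rintro p hp
    by_cases hc : lexR g p.1 p.2
    · exact Or.inr ⟨hp, fun hc' => lexR_asymm hc hc'⟩
    · exact Or.inl ⟨hp, hc⟩
  rw [Measure.prod_prod] at h3
  simpa using h3

lemma null_of_null (hg : Measurable g) {L : Set ℝ} (hL : MeasurableSet L)
    (h : ∀ y ∈ L, μ01 (L ∩ {z | lexR g z y}) = 0) : μ01 L = 0 := by
  -- reversed order: reduce to full
  have hR := measurableSet_lexR hg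
  have h1 : (μ01.prod μ01) ((L ×ˢ L) ∩ {p : ℝ × ℝ | lexR g p.1 p.2}) = 0 := by
    rw [Measure.prod_apply_symm ((hL.prod hL).inter hR)]
    refine (lintegral_congr fun y => ?_).trans lintegral_zero
    by_cases hy : y ∈ L
    · refine measure_mono_null ?_ (h y hy)
      rintro z ⟨hz, hz'⟩
      exact ⟨hz.1, hz'⟩
    · refine measure_mono_null ?_ measure_empty
      rintro z ⟨hz, hz'⟩
      exact hy hz.2
  have h2 : (μ01.prod μ01) ((L ×ˢ L) ∩ {p : ℝ × ℝ | lexR g p.2 p.1}) = 0 := by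
    have := (Measure.measurePreserving_swap (μ := μ01) (ν := μ01)).measure_preimage
      ((hL.prod hL).inter hR).nullMeasurableSet
    rw [h1] at this
    rw [← this]
    congr 1
    ext ⟨x, y⟩
    simp [and_comm]
  have h4 : (μ01.prod μ01) {p : ℝ × ℝ | p.1 = p.2} = 0 := by
    rw [Measure.prod_apply_symm (measurableSet_eq_fun measurable_fst measurable_snd)]
    refine (lintegral_congr fun y => ?_).trans lintegral_zero
    have : (fun x : ℝ => (x, y)) ⁻¹' {p : ℝ × ℝ | p.1 = p.2} = {y} := by ext; simp
    rw [this]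
    exact measure_singleton y
  have h3 : (μ01.prod μ01) (L ×ˢ L) = 0 := by
    refine measure_mono_null ?_ (measure_union_null (measure_union_null h1 h2) h4)
    rintro p hp
    rcases lexR_tri (g := g) p.1 p.2 with hc | hc | hc
    · exact Or.inl (Or.inl ⟨hp, hc⟩)
    · exact Or.inr hc
    · exact Or.inl (Or.inr ⟨hp, hc⟩)
  rw [Measure.prod_prod] at h3
  simpa using h3

lemma rankF_noatom (hg : Measurable g) (s : ℝ) : μ01 {x | rankF g x = s} = 0 := by
  have hφ := measurable_rankF hg
  set E : Set ℝ := {x | rankF g x = s} with hE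
  have hEm : MeasurableSet E := hφ (measurableSet_singleton s)
  have hlt : MeasurableSet {x | rankF g x < s} := hφ measurableSet_Iio
  have hc : ∀ x ∈ E, μ01.real (E ∩ {y | lexR g y x}) = s - μ01.real {x | rankF g x < s} := by
    intro x hx
    have hx' : rankF g x = s := hx
    have : {y | lexR g y x} = {x | rankF g x < s} ∪ (E ∩ {y | lexR g y x}) := by
      ext y
      constructor
      · intro hy
        have hy' : rankF g y ≤ s := hx' ▸ rankF_mono hy
        rcases hy'.lt_or_eq with h | h
        · exact Or.inl h
        · exact Or.inr ⟨h, hy⟩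
      · rintro (hy | hy)
        · exact lexR_of_lt (by rw [hx']; exact hy)
        · exact hy.2
    have h2 : μ01.real {y | lexR g y x} = s := hx
    rw [this, measureReal_union _ (hEm.inter (measurableSet_lexR' hg x))] at h2
    · linarith
    · rw [Set.disjoint_left]
      intro y hy hy'
      have h1 : rankF g y < s := hy
      have h2 : rankF g y = s := hy'.1
      linarith
  refine null_of_null hg hEm fun x hx => ?_
  have hLm : MeasurableSet (E ∩ {z | lexR g z x}) := hEm.inter (measurableSet_lexR' hg x)
  refine null_of_full hg hLm fun y hy => ?_
  have hsub : E ∩ {z | lexR g z y} ⊆ E ∩ {z | lexR g z x} := fun z hz =>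
    ⟨hz.1, lexR_trans hz.2 hy.2⟩
  have h1 : μ01 ((E ∩ {z | lexR g z x}) \ (E ∩ {z | lexR g z y})) = 0 := by
    rw [← measureReal_eq_zero_iff, measureReal_sdiff hsub (hEm.inter (measurableSet_lexR' hg y)),
      hc x hx, hc y hy.1, sub_self]
  refine measure_mono_null ?_ h1
  rintro z ⟨hz, hz'⟩
  exact ⟨hz, fun h => hz' h.2⟩

lemma cdf_mu01 {t : ℝ} (ht : t ∈ Icc (0:ℝ) 1) : ProbabilityTheory.cdf μ01 t = t := by
  rw [ProbabilityTheory.cdf_eq_real, measureReal_def, Measure.restrict_apply measurableSet_Iic]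
  have : Iic t ∩ Icc 0 1 = Icc 0 t := by
    ext u
    simp only [mem_inter_iff, mem_Iic, mem_Icc]
    exact ⟨fun h => ⟨h.2.1, h.1⟩, fun h => ⟨h.2, h.1, h.2.trans ht.2⟩⟩
  rw [this]
  simp [ht.1]

lemma cdf_mu01_neg {t : ℝ} (ht : t < 0) : ProbabilityTheory.cdf μ01 t = 0 := by
  have := (ProbabilityTheory.cdf μ01).mono ht.le
  rw [cdf_mu01 ⟨le_rfl, zero_le_one⟩] at this
  exact le_antisymm this (ProbabilityTheory.cdf_nonneg _ _)

lemma measurePreserving_rankF (hg : Measurable g) : MeasurePreserving (rankF g) μ01 μ01 := by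
  have hφ := measurable_rankF hg
  refine ⟨hφ, ?_⟩
  set ν := μ01.map (rankF g) with hν
  have : IsProbabilityMeasure ν := Measure.isProbabilityMeasure_map hφ.aemeasurable
  have hna : ∀ s, ν {s} = 0 := fun s => by
    rw [hν, Measure.map_apply hφ (measurableSet_singleton s)]
    exact rankF_noatom hg s
  have hcont : Continuous (ProbabilityTheory.cdf ν) := by
    rw [continuous_iff_continuousAt]
    intro s
    rw [(ProbabilityTheory.cdf ν).mono.continuousAt_iff_leftLim_eq_rightLim,
      StieltjesFunction.rightLim_eq]
    have h1 := (ProbabilityTheory.cdf ν).measure_singleton s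
    rw [ProbabilityTheory.measure_cdf, hna, eq_comm, ENNReal.ofReal_eq_zero] at h1
    exact le_antisymm ((ProbabilityTheory.cdf ν).mono.leftLim_le le_rfl) (by linarith)
  have h0 : ProbabilityTheory.cdf ν 0 = 0 := by
    rw [ProbabilityTheory.cdf_eq_real, measureReal_eq_zero_iff]
    refine measure_mono_null (t := {0} ∪ Iio 0) ?_ (measure_union_null (hna 0) ?_)
    · intro t ht
      rcases (mem_Iic.1 ht).lt_or_eq with h | h
      · exact Or.inr h
      · exact Or.inl h
    · rw [hν, Measure.map_apply hφ measurableSet_Iio]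
      refine measure_mono_null ?_ measure_empty
      intro x hx
      exact absurd (mem_Iio.1 hx) (not_lt.2 (rankF_mem x).1)
  have h1 : ProbabilityTheory.cdf ν 1 = 1 := by
    rw [ProbabilityTheory.cdf_eq_real, hν, map_measureReal_apply hφ measurableSet_Iic]
    have : rankF g ⁻¹' Iic 1 = univ := by
      ext x
      simp [(rankF_mem (g := g) x).2]
    rw [this]
    simp
  have hval : ∀ x, ProbabilityTheory.cdf ν (rankF g x) = rankF g x := by
    intro x
    rw [ProbabilityTheory.cdf_eq_real]
    apply le_antisymm
    · have : ν.real (Iic (rankF g x)) ≤ ν.real (Iio (rankF g x)) := by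
        have h : Iic (rankF g x) = Iio (rankF g x) ∪ {rankF g x} := by
          ext; simp [le_iff_lt_or_eq]
        rw [h]
        refine (measureReal_union_le _ _).trans ?_
        simp [measureReal_def, hna]
      refine this.trans ?_
      rw [hν, map_measureReal_apply hφ measurableSet_Iio]
      exact measureReal_mono fun y hy => lexR_of_lt hy
    · rw [hν, map_measureReal_apply hφ measurableSet_Iic]
      exact measureReal_mono fun y hy => rankF_mono hy
  have hid : ∀ t ∈ Icc (0:ℝ) 1, ProbabilityTheory.cdf ν t = t := by
    intro t ht
    by_contra hne
    have hZ : IsClosed {u | ProbabilityTheory.cdf ν u = u} := isClosed_eq hcont continuous_id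
    obtain ⟨s, hs, hsg⟩ := ((isCompact_Icc (a := (0:ℝ)) (b := t)).inter_right hZ).exists_isGreatest
      ⟨0, ⟨le_rfl, ht.1⟩, h0⟩
    obtain ⟨s', hs', hsl⟩ := ((isCompact_Icc (a := t) (b := (1:ℝ))).inter_right hZ).exists_isLeast
      ⟨1, ⟨ht.2, le_rfl⟩, h1⟩
    have hst : s < t := lt_of_le_of_ne hs.1.2 fun h => hne (h ▸ hs.2)
    have hss : s < s' := hst.trans_le hs'.1.1
    have hz : ν (Ioc s s') = 0 := by
      refine measure_mono_null (t := {s'} ∪ Ioo s s') ?_ (measure_union_null (hna s') ?_)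
      · intro u hu
        rcases hu.2.lt_or_eq with h | h
        · exact Or.inr ⟨hu.1, h⟩
        · exact Or.inl h
      · rw [hν, Measure.map_apply hφ measurableSet_Ioo]
        refine measure_mono_null ?_ measure_empty
        intro x hx
        rcases le_total (rankF g x) t with h | h
        · exact absurd (hsg ⟨⟨(rankF_mem x).1, h⟩, hval x⟩) (not_le.2 hx.1)
        · exact absurd (hsl ⟨⟨h, (rankF_mem x).2⟩, hval x⟩) (not_le.2 hx.2)
    rw [← ProbabilityTheory.measure_cdf ν, StieltjesFunction.measure_Ioc,
      ENNReal.ofReal_eq_zero] at hz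
    have e1 : ProbabilityTheory.cdf ν s = s := hs.2
    have e2 : ProbabilityTheory.cdf ν s' = s' := hs'.2
    linarith
  refine Measure.eq_of_cdf _ _ ?_
  ext t
  rcases lt_or_ge t 0 with ht | ht
  · rw [cdf_mu01_neg ht]
    exact le_antisymm (h0 ▸ (ProbabilityTheory.cdf ν).mono ht.le) (ProbabilityTheory.cdf_nonneg ν t)
  · rcases le_or_gt t 1 with ht' | ht'
    · rw [hid t ⟨ht, ht'⟩, cdf_mu01 ⟨ht, ht'⟩]
    · have e1 := (ProbabilityTheory.cdf ν).mono ht'.le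
      have e2 := (ProbabilityTheory.cdf μ01).mono ht'.le
      rw [h1] at e1
      rw [cdf_mu01 ⟨zero_le_one, le_rfl⟩] at e2
      rw [le_antisymm (ProbabilityTheory.cdf_le_one ν t) e1,
        le_antisymm (ProbabilityTheory.cdf_le_one μ01 t) e2]
end


/-- quantile function of a law on `[0,1]` -/
noncomputable def quant (P : Measure ℝ) (t : ℝ) : ℝ :=
  sInf {s | 0 ≤ s ∧ min t 1 ≤ P.real (Iic s)}

lemma quant_bdd (P : Measure ℝ) (t : ℝ) : BddBelow {s | 0 ≤ s ∧ min t 1 ≤ P.real (Iic s)} :=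
  ⟨0, fun _ h => h.1⟩

section
variable {g : ℝ → ℝ}

lemma real_map (hg : Measurable g) (s : ℝ) : (μ01.map g).real (Iic s) = μ01.real {x | g x ≤ s} := by
  rw [map_measureReal_apply hg measurableSet_Iic]; rfl

lemma quant_mono (hg : Measurable g) (hg1 : ∀ x, g x ∈ Icc (0:ℝ) 1) :
    Monotone (quant (μ01.map g)) := by
  intro t t' h
  refine csInf_le_csInf (quant_bdd _ _) ⟨1, zero_le_one, ?_⟩ fun s hs =>
    ⟨hs.1, (min_le_min_right 1 h).trans hs.2⟩
  rw [real_map hg]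
  have : {x | g x ≤ 1} = univ := by ext x; simp [(hg1 x).2]
  rw [this]
  simp

lemma rankF_le (x : ℝ) : rankF g x ≤ μ01.real {y | g y ≤ g x} := by
  refine measureReal_mono fun y hy => ?_
  rcases hy with h | h
  · exact h.le
  · exact h.1.le

lemma quant_rankF (hg : Measurable g) (hg1 : ∀ x, g x ∈ Icc (0:ℝ) 1) :
    ∀ᵐ x ∂μ01, quant (μ01.map g) (rankF g x) = g x := by
  have hφ := measurable_rankF hg
  have hN : ∀ s : ℚ, ∀ᵐ x ∂μ01, rankF g x ≤ μ01.real {y | g y ≤ s} → g x ≤ s := by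
    intro s
    set F := μ01.real {y | g y ≤ s} with hF
    have hsub : {y | g y ≤ s} ⊆ {x | rankF g x ≤ F} := by
      intro y hy
      refine (rankF_le y).trans (measureReal_mono fun z hz => ?_)
      exact le_trans (show g z ≤ g y from hz) hy
    have hm : MeasurableSet {y | g y ≤ s} := hg measurableSet_Iic
    have hme : μ01.real {x | rankF g x ≤ F} = F := by
      have h1 := cdf_mu01 (t := F) ⟨measureReal_nonneg, measureReal_le_one⟩
      rw [ProbabilityTheory.cdf_eq_real, ← (measurePreserving_rankF hg).map_eq,
        map_measureReal_apply hφ measurableSet_Iic] at h1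
      exact h1
    have hd : μ01 ({x | rankF g x ≤ F} \ {y | g y ≤ s}) = 0 := by
      rw [← measureReal_eq_zero_iff, measureReal_sdiff hsub hm, hme, ← hF, sub_self]
    rw [ae_iff]
    refine measure_mono_null ?_ hd
    intro x hx
    simp only [Set.mem_ofPred_eq, Classical.not_imp] at hx
    exact hx
  rw [← ae_all_iff] at hN
  filter_upwards [hN] with x hx
  have hmin : min (rankF g x) 1 = rankF g x := min_eq_left (rankF_mem x).2
  have hmem : g x ∈ {s | 0 ≤ s ∧ min (rankF g x) 1 ≤ (μ01.map g).real (Iic s)} := by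
    refine ⟨(hg1 x).1, ?_⟩
    rw [hmin, real_map hg]
    exact rankF_le x
  refine le_antisymm (csInf_le (quant_bdd _ _) hmem) ?_
  refine le_csInf ⟨_, hmem⟩ ?_
  rintro s ⟨hs0, hs⟩
  rw [hmin, real_map hg] at hs
  by_contra hlt
  push Not at hlt
  obtain ⟨r, hr1, hr2⟩ := exists_rat_btwn hlt
  have := hx r (hs.trans (measureReal_mono fun y hy => le_trans (show g y ≤ s from hy) hr1.le))
  linarith

end

/-- transfer to the unit interval -/
lemma exists_transfer {f f' : ℝ → ℕ → unitInterval} (hf : Measurable f) (hf' : Measurable f')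
    (h : μ01.map f = μ01.map f') : ∃ (r : ℝ → ℕ → unitInterval) (φ φ' : ℝ → ℝ), Measurable r ∧
      IsMeasurePreservingMap φ ∧ IsMeasurePreservingMap φ' ∧
      (∀ᵐ x ∂μ01, f x = r (φ x)) ∧ (∀ᵐ x ∂μ01, f' x = r (φ' x)) := by
  obtain ⟨e, he⟩ : ∃ e : (ℕ → unitInterval) → ℝ, MeasurableEmbedding e ∧
      ∀ z, e z ∈ Icc (0:ℝ) 1 :=
    ⟨_, (MeasurableEmbedding.subtype_coe measurableSet_Icc).comp
      (measurableEmbedding_sigmoid_comp_embeddingReal (ℕ → unitInterval)), fun z => Subtype.prop _⟩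
  obtain ⟨j, hj, hje⟩ := he.1.exists_measurable_extend measurable_id (fun _ => inferInstance)
  have hg : Measurable (e ∘ f) := he.1.measurable.comp hf
  have hg' : Measurable (e ∘ f') := he.1.measurable.comp hf'
  have hl : μ01.map (e ∘ f) = μ01.map (e ∘ f') := by
    rw [← Measure.map_map he.1.measurable hf, ← Measure.map_map he.1.measurable hf', h]
  have hq := quant_rankF hg (fun x => he.2 _)
  have hq' := quant_rankF hg' (fun x => he.2 _)
  refine ⟨fun t => j (quant (μ01.map (e ∘ f)) t), rankF (e ∘ f), rankF (e ∘ f'),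
    hj.comp (quant_mono hg fun x => he.2 _).measurable,
    ⟨fun x _ => rankF_mem x, measurePreserving_rankF hg⟩,
    ⟨fun x _ => rankF_mem x, measurePreserving_rankF hg'⟩, ?_, ?_⟩
  · filter_upwards [hq] with x hx
    rw [hx]
    exact (congrFun hje (f x)).symm
  · filter_upwards [hq'] with x hx
    rw [hl, hx]
    exact (congrFun hje (f' x)).symm

lemma ae_prod_of_ae {p : ℝ → Prop} (h : ∀ᵐ x ∂μ01, p x) :
    ∀ᵐ q ∂(μ01.prod μ01), p q.1 ∧ p q.2 := by
  filter_upwards [Measure.quasiMeasurePreserving_fst.ae h,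
    Measure.quasiMeasurePreserving_snd.ae h] with q h1 h2 using ⟨h1, h2⟩

lemma forward {W W' : ℝ → ℝ → ℝ} (hW : IsGraphon W) (hW' : IsGraphon W')
    (H : ∀ (n : ℕ) (F : SimpleGraph (Fin n)), homDensity F W = homDensity F W') :
    ∃ (U : ℝ → ℝ → ℝ) (φ φ' : ℝ → ℝ), IsGraphon U ∧
      IsMeasurePreservingMap φ ∧ IsMeasurePreservingMap φ' ∧
      (∀ᵐ p ∂(μ01.prod μ01), W p.1 p.2 = U (φ p.1) (φ p.2)) ∧
      (∀ᵐ p ∂(μ01.prod μ01), W' p.1 p.2 = U (φ' p.1) (φ' p.2)) := by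
  obtain ⟨V, f, f', hV, hV1, hf, hf', hl, hWV, hWV'⟩ := exists_common hW hW' H
  obtain ⟨r, φ, φ', hr, hφ, hφ', hfr, hfr'⟩ := exists_transfer hf hf' hl
  have key : ∀ {W : ℝ → ℝ → ℝ} {f : ℝ → ℕ → unitInterval} {φ : ℝ → ℝ}, IsGraphon W →
      (∀ᵐ p ∂(μ01.prod μ01), W p.1 p.2 = V (joinU (f p.1) (f p.2))) →
      (∀ᵐ x ∂μ01, f x = r (φ x)) → ∀ᵐ p ∂(μ01.prod μ01), W p.1 p.2 =
        (V (joinU (r (φ p.1)) (r (φ p.2))) + V (joinU (r (φ p.2)) (r (φ p.1)))) / 2 := by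
    intro W f φ hW h1 h2
    have h3 := (Measure.measurePreserving_swap (μ := μ01) (ν := μ01)).quasiMeasurePreserving.ae h1
    filter_upwards [h1, h3, ae_prod_of_ae h2] with p e1 e3 e2
    simp only [Prod.fst_swap, Prod.snd_swap] at e3
    rw [hW.2.1] at e3
    rw [← e2.1, ← e2.2, ← e1, ← e3]
    ring
  refine ⟨fun s t => (V (joinU (r s) (r t)) + V (joinU (r t) (r s))) / 2, φ, φ', ⟨?_, ?_, ?_⟩,
    hφ, hφ', key hW hWV hfr, key hW' hWV' hfr'⟩
  · have h1 : Measurable fun p : ℝ × ℝ => joinU (r p.1) (r p.2) :=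
      measurable_joinU.comp ((hr.comp measurable_fst).prodMk (hr.comp measurable_snd))
    have h2 : Measurable fun p : ℝ × ℝ => joinU (r p.2) (r p.1) :=
      measurable_joinU.comp ((hr.comp measurable_snd).prodMk (hr.comp measurable_fst))
    exact ((hV.comp h1).add (hV.comp h2)).div_const 2
  · intro x y
    simp only [add_comm]
  · intro x y
    have h1 := hV1 (joinU (r x) (r y))
    have h2 := hV1 (joinU (r y) (r x))
    constructor <;> simp only <;> linarith [h1.1, h1.2, h2.1, h2.2]

lemma pi_pair {n : ℕ} (i j : Fin n) (h : i ≠ j) :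
    MeasurePreserving (fun x : Fin n → ℝ => (x i, x j)) (Measure.pi fun _ => μ01)
      (μ01.prod μ01) := by
  have hinj : Function.Injective (fun b : Bool => if b then j else i) := by
    intro b c hbc
    cases b <;> cases c <;> simp_all
  have h1 := piU_bool.comp (piU_inj _ hinj)
  unfold piU at h1
  rw [Measure.infinitePi_eq_pi] at h1
  exact h1

lemma homDensity_pull {W U : ℝ → ℝ → ℝ} (hU : IsGraphon U) {φ : ℝ → ℝ}
    (hφ : IsMeasurePreservingMap φ)
    (h : ∀ᵐ p ∂(μ01.prod μ01), W p.1 p.2 = U (φ p.1) (φ p.2)) {n : ℕ} (F : SimpleGraph (Fin n)) :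
    homDensity F W = homDensity F U := by
  classical
  have hmp : MeasurePreserving (fun (x : Fin n → ℝ) i => φ (x i)) (Measure.pi fun _ => μ01)
      (Measure.pi fun _ => μ01) := measurePreserving_pi _ _ fun _ => hφ.2
  have hall : ∀ᵐ x ∂(Measure.pi fun _ : Fin n => μ01), ∀ p : Fin n × Fin n, p.1 ≠ p.2 →
      W (x p.1) (x p.2) = U (φ (x p.1)) (φ (x p.2)) := by
    rw [ae_all_iff]
    intro p
    by_cases hp : p.1 = p.2
    · simp [hp]
    · filter_upwards [(pi_pair p.1 p.2 hp).quasiMeasurePreserving.ae h] with x hx _ using hx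
  unfold homDensity
  conv_rhs => rw [← hmp.map_eq]
  rw [integral_map hmp.measurable.aemeasurable]
  · refine integral_congr_ae ?_
    filter_upwards [hall] with x hx
    refine Finset.prod_congr rfl fun p hp => hx p ?_
    simp only [Finset.mem_filter] at hp
    exact hp.2.1.ne
  · refine Measurable.aestronglyMeasurable (Finset.measurable_prod _ fun p _ => ?_)
    exact hU.meas (measurable_pi_apply _) (measurable_pi_apply _)

/-- Two graphons have the same homomorphism densities over all finite simple graphs
if and only if they are weakly isomorphic. -/
theorem homDensity_eq_iff_weakly_isomorphic (W W' : ℝ → ℝ → ℝ)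
    (hW : IsGraphon W) (hW' : IsGraphon W') :
    (∀ (n : ℕ) (F : SimpleGraph (Fin n)), homDensity F W = homDensity F W') ↔
    (∃ (U : ℝ → ℝ → ℝ) (φ φ' : ℝ → ℝ), IsGraphon U ∧
      IsMeasurePreservingMap φ ∧ IsMeasurePreservingMap φ' ∧
      (∀ᵐ p ∂(μ01.prod μ01), W p.1 p.2 = U (φ p.1) (φ p.2)) ∧
      (∀ᵐ p ∂(μ01.prod μ01), W' p.1 p.2 = U (φ' p.1) (φ' p.2))) := by
  constructor
  · exact forward hW hW'
  · rintro ⟨U, φ, φ', hU, hφ, hφ', h, h'⟩ n F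
    rw [homDensity_pull hU hφ h, homDensity_pull hU hφ' h']
end

section
/- The space of graphons with the cut distance is compact as a pseudometric space: every sequence (W_n) of graphons has a subsequence (W_{n_j}) and a graphon W such that δ_□(W_{n_j}, W) → 0 as j → ∞. -/
open MeasureTheory Set Filter

/-- Lebesgue measure on the unit square. -/
noncomputable abbrev π01 : Measure (ℝ × ℝ) := μ01.prod μ01

instance instProbμ01 : IsProbabilityMeasure μ01 := ⟨by simp [μ01]⟩

/-- bounded measurable kernel -/
def BM (U : ℝ → ℝ → ℝ) : Prop :=
  Measurable (Function.uncurry U) ∧ ∃ B : ℝ, ∀ x y, |U x y| ≤ B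

/-- cut norm at most `ε` -/
def CB (U : ℝ → ℝ → ℝ) (ε : ℝ) : Prop :=
  ∀ S T : Set ℝ, MeasurableSet S → MeasurableSet T →
    |∫ p in S ×ˢ T, U p.1 p.2 ∂π01| ≤ ε

lemma BM.meas {U : ℝ → ℝ → ℝ} (h : BM U) : Measurable (fun p : ℝ × ℝ => U p.1 p.2) := h.1

lemma BM.integrable {U : ℝ → ℝ → ℝ} (h : BM U) : Integrable (fun p : ℝ × ℝ => U p.1 p.2) π01 := by
  obtain ⟨B, hB⟩ := h.2
  exact Integrable.of_bound h.meas.aestronglyMeasurable B (ae_of_all _ fun p => hB _ _)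

lemma BM.sub {U V : ℝ → ℝ → ℝ} (h : BM U) (h' : BM V) : BM (fun x y => U x y - V x y) := by
  obtain ⟨B, hB⟩ := h.2
  obtain ⟨C, hC⟩ := h'.2
  exact ⟨h.1.sub h'.1, B + C, fun x y => (abs_sub _ _).trans (add_le_add (hB _ _) (hC _ _))⟩

lemma BM.add {U V : ℝ → ℝ → ℝ} (h : BM U) (h' : BM V) : BM (fun x y => U x y + V x y) := by
  obtain ⟨B, hB⟩ := h.2
  obtain ⟨C, hC⟩ := h'.2
  exact ⟨h.1.add h'.1, B + C, fun x y => (abs_add_le _ _).trans (add_le_add (hB _ _) (hC _ _))⟩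

lemma BM.mul {U V : ℝ → ℝ → ℝ} (h : BM U) (h' : BM V) : BM (fun x y => U x y * V x y) := by
  obtain ⟨B, hB⟩ := h.2
  obtain ⟨C, hC⟩ := h'.2
  refine ⟨h.1.mul h'.1, B * C, fun x y => ?_⟩
  rw [abs_mul]
  exact mul_le_mul (hB _ _) (hC _ _) (abs_nonneg _) ((abs_nonneg _).trans (hB x y))

lemma BM.const (c : ℝ) : BM (fun _ _ => c) := ⟨measurable_const, |c|, fun _ _ => le_rfl⟩

lemma BM.comp {U : ℝ → ℝ → ℝ} (h : BM U) {φ : ℝ → ℝ} (hφ : Measurable φ) :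
    BM (fun x y => U (φ x) (φ y)) := by
  obtain ⟨B, hB⟩ := h.2
  exact ⟨h.meas.comp ((hφ.comp measurable_fst).prodMk (hφ.comp measurable_snd)), B,
    fun x y => hB _ _⟩

lemma IsGraphon.bm {U : ℝ → ℝ → ℝ} (h : IsGraphon U) : BM U :=
  ⟨h.1, 1, fun x y => by rw [abs_of_nonneg (h.2.2 x y).1]; exact (h.2.2 x y).2⟩

lemma IsGraphon.comp {U : ℝ → ℝ → ℝ} (h : IsGraphon U) {φ : ℝ → ℝ} (hφ : Measurable φ) :
    IsGraphon (fun x y => U (φ x) (φ y)) :=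
  ⟨(h.bm.comp hφ).1, fun _ _ => h.2.1 _ _, fun _ _ => h.2.2 _ _⟩

lemma iter_eq {U : ℝ → ℝ → ℝ} (h : BM U) {S T : Set ℝ} 
    (hS' : S ⊆ Icc 0 1) (hT' : T ⊆ Icc 0 1) (hS : MeasurableSet S) (hT : MeasurableSet T) :
    ∫ x in S, ∫ y in T, U x y = ∫ p in S ×ˢ T, U p.1 p.2 ∂π01 := by
  rw [setIntegral_prod _ h.integrable.integrableOn]
  simp only [μ01]
  rw [Measure.restrict_restrict hS, Measure.restrict_restrict hT, inter_eq_left.2 hS',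
    inter_eq_left.2 hT']

lemma CB.nonneg {U : ℝ → ℝ → ℝ} {ε : ℝ} (h : CB U ε) : 0 ≤ ε :=
  (abs_nonneg _).trans (h ∅ ∅ MeasurableSet.empty MeasurableSet.empty)

lemma CB.cutNorm_le {U : ℝ → ℝ → ℝ} (h : BM U) {ε : ℝ} (hc : CB U ε) : cutNorm U ≤ ε := by
  apply Real.sSup_le _ hc.nonneg
  rintro r ⟨S, T, hS, hT, hS', hT', rfl⟩
  rw [iter_eq h hS' hT' hS hT]
  exact hc S T hS hT

lemma cutNorm_nonneg (U : ℝ → ℝ → ℝ) : 0 ≤ cutNorm U := by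
  apply Real.sSup_nonneg
  rintro r ⟨S, T, hS, hT, hS', hT', rfl⟩
  exact abs_nonneg _

lemma BM.cb_of_abs {U : ℝ → ℝ → ℝ} (h : BM U) : CB U (∫ p, |U p.1 p.2| ∂π01) := by
  intro S T hS hT
  refine (abs_integral_le_integral_abs).trans ?_
  exact setIntegral_le_integral h.integrable.abs (ae_of_all _ fun _ => abs_nonneg _)

lemma BM.cb {U : ℝ → ℝ → ℝ} (h : BM U) : CB U (cutNorm U) := by
  intro S T hS hT
  have e : ∫ p in S ×ˢ T, U p.1 p.2 ∂π01 =
      ∫ p in (S ∩ Icc 0 1) ×ˢ (T ∩ Icc 0 1), U p.1 p.2 ∂π01 := by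
    simp only [π01, μ01, Measure.prod_restrict, Measure.restrict_restrict (hS.prod hT),
      Measure.restrict_restrict ((hS.inter measurableSet_Icc).prod (hT.inter measurableSet_Icc)),
      prod_inter_prod, inter_assoc, inter_self]
  rw [e]
  apply le_csSup
  · refine ⟨∫ p, |U p.1 p.2| ∂π01, ?_⟩
    rintro r ⟨S, T, hS, hT, hS', hT', rfl⟩
    rw [iter_eq h hS' hT' hS hT]
    exact h.cb_of_abs S T hS hT
  · refine ⟨_, _, hS.inter measurableSet_Icc, hT.inter measurableSet_Icc, inter_subset_right,
      inter_subset_right, ?_⟩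
    rw [iter_eq h inter_subset_right inter_subset_right (hS.inter measurableSet_Icc)
      (hT.inter measurableSet_Icc)]

lemma CB.mono {U : ℝ → ℝ → ℝ} {a b : ℝ} (h : CB U a) (hab : a ≤ b) : CB U b :=
  fun S T hS hT => (h S T hS hT).trans hab

lemma CB.trans {U V W : ℝ → ℝ → ℝ} (hU : BM U) (hV : BM V) (hW : BM W) {a b : ℝ}
    (h1 : CB (fun x y => U x y - V x y) a) (h2 : CB (fun x y => V x y - W x y) b) :
    CB (fun x y => U x y - W x y) (a + b) := by
  intro S T hS hT
  have e : ∫ p in S ×ˢ T, (U p.1 p.2 - W p.1 p.2) ∂π01 =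
      (∫ p in S ×ˢ T, (U p.1 p.2 - V p.1 p.2) ∂π01)
      + ∫ p in S ×ˢ T, (V p.1 p.2 - W p.1 p.2) ∂π01 := by
    rw [← integral_add (hU.sub hV).integrable.integrableOn (hV.sub hW).integrable.integrableOn]
    simp
  rw [e]
  exact (abs_add_le _ _).trans (add_le_add (h1 S T hS hT) (h2 S T hS hT))

lemma CB.symm {U V : ℝ → ℝ → ℝ} {a : ℝ}
    (h1 : CB (fun x y => U x y - V x y) a) : CB (fun x y => V x y - U x y) a := by
  intro S T hS hT
  have := h1 S T hS hT
  rw [← abs_neg, ← integral_neg]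
  simpa using this

lemma IsInvMeasurePreserving.id : IsInvMeasurePreserving (fun x => x) :=
  ⟨fun _ h => h, MeasurePreserving.id _, fun x => x, fun _ h => h, MeasurePreserving.id _,
    fun _ _ => rfl, fun _ _ => rfl⟩

lemma IsInvMeasurePreserving.comp {φ φ' : ℝ → ℝ} (h : IsInvMeasurePreserving φ)
    (h' : IsInvMeasurePreserving φ') : IsInvMeasurePreserving (fun x => φ (φ' x)) := by
  obtain ⟨a, b, ψ, c, d, e, f⟩ := h
  obtain ⟨a', b', ψ', c', d', e', f'⟩ := h'
  refine ⟨a.comp a', b.comp b', fun x => ψ' (ψ x), c'.comp c, d'.comp d, fun x hx => ?_,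
    fun x hx => ?_⟩
  · simp only [e _ (a' hx), e' _ hx]
  · simp only [f' _ (c hx), f _ hx]

lemma ae_mem_Icc : ∀ᵐ p ∂π01, p.1 ∈ Icc (0:ℝ) 1 ∧ p.2 ∈ Icc (0:ℝ) 1 := by
  simp only [π01, μ01, Measure.prod_restrict]
  filter_upwards [ae_restrict_mem (measurableSet_Icc.prod measurableSet_Icc)] with p hp using hp

lemma CB.congr {U V : ℝ → ℝ → ℝ} {a : ℝ} (h1 : CB U a)
    (h : ∀ᵐ p ∂π01, U p.1 p.2 = V p.1 p.2) : CB V a := by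
  intro S T hS hT
  rw [← integral_congr_ae (ae_restrict_of_ae h)]
  exact h1 S T hS hT

lemma CB.comp {U : ℝ → ℝ → ℝ} (hU : BM U) {a : ℝ} (h1 : CB U a)
    {φ : ℝ → ℝ} (h : IsInvMeasurePreserving φ) : CB (fun x y => U (φ x) (φ y)) a := by
  obtain ⟨ha, hb, ψ, hc, hd, he, hf⟩ := h
  intro S T hS hT
  have hS' := hd.measurable hS
  have hT' := hd.measurable hT
  have key := h1 _ _ hS' hT'
  convert key using 2
  rw [← integral_indicator (hS.prod hT), ← integral_indicator (hS'.prod hT')]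
  have mp : MeasurePreserving (Prod.map φ φ) π01 π01 := hb.prod hb
  conv_rhs => rw [← mp.map_eq]
  rw [integral_map mp.measurable.aemeasurable
    (hU.meas.indicator (hS'.prod hT')).aestronglyMeasurable]
  apply integral_congr_ae
  filter_upwards [ae_mem_Icc] with p hp
  have hiff : Prod.map φ φ p ∈ (ψ ⁻¹' S) ×ˢ (ψ ⁻¹' T) ↔ p ∈ S ×ˢ T := by
    rw [Set.mem_prod, Set.mem_prod]
    simp only [mem_preimage, Prod.map_fst, Prod.map_snd, he _ hp.1, he _ hp.2]
  by_cases hm : p ∈ S ×ˢ T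
  · rw [indicator_of_mem hm, indicator_of_mem (hiff.2 hm)]
    rfl
  · rw [indicator_of_notMem hm, indicator_of_notMem (fun h => hm (hiff.1 h))]

/-- closeness up to a relabelling -/
def Close (ε : ℝ) (U V : ℝ → ℝ → ℝ) : Prop :=
  ∃ φ, IsInvMeasurePreserving φ ∧ CB (fun x y => U x y - V (φ x) (φ y)) ε

lemma Close.symm {ε : ℝ} {U V : ℝ → ℝ → ℝ} (hU : BM U) (hV : BM V) (h : Close ε U V) :
    Close ε V U := by
  obtain ⟨φ, h0, h⟩ := h
  obtain ⟨ha, hb, ψ, hc, hd, he, hf⟩ := id h0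
  have hψ : IsInvMeasurePreserving ψ := ⟨hc, hd, φ, ha, hb, hf, he⟩
  refine ⟨ψ, hψ, ?_⟩
  have := (h.comp (hU.sub (hV.comp hb.measurable)) hψ).symm
  refine this.congr ?_
  filter_upwards [ae_mem_Icc] with p hp
  rw [hf _ hp.1, hf _ hp.2]

lemma Close.trans {ε δ : ℝ} {U V W : ℝ → ℝ → ℝ} (hU : BM U) (hV : BM V) (hW : BM W)
    (h : Close ε U V) (h' : Close δ V W) : Close (ε + δ) U W := by
  obtain ⟨φ, h0, h⟩ := h
  obtain ⟨φ', h0', h'⟩ := h'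
  exact ⟨_, h0'.comp h0, h.trans hU (hV.comp h0.2.1.measurable)
    (hW.comp (h0'.2.1.measurable.comp h0.2.1.measurable))
    (h'.comp (hV.sub (hW.comp h0'.2.1.measurable)) h0)⟩

lemma cutDist_nonneg (U V : ℝ → ℝ → ℝ) : 0 ≤ cutDist U V := by
  apply Real.sInf_nonneg
  rintro r ⟨φ, _, rfl⟩
  exact cutNorm_nonneg _

lemma Close.cutDist_le {ε : ℝ} {U V : ℝ → ℝ → ℝ} (hU : BM U) (hV : BM V) (h : Close ε U V) :
    cutDist U V ≤ ε := by
  obtain ⟨φ, h0, h⟩ := h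
  refine le_trans (csInf_le ?_ ⟨φ, h0, rfl⟩) (h.cutNorm_le (hU.sub (hV.comp h0.2.1.measurable)))
  refine ⟨0, ?_⟩
  rintro r ⟨φ, _, rfl⟩
  exact cutNorm_nonneg _

lemma close_of_lt {ε : ℝ} {U V : ℝ → ℝ → ℝ} (hU : BM U) (hV : BM V) (h : cutDist U V < ε) :
    Close ε U V := by
  obtain ⟨r, ⟨φ, h0, rfl⟩, hr⟩ := exists_lt_of_csInf_lt (by exact ⟨_, _, IsInvMeasurePreserving.id, rfl⟩) h
  exact ⟨φ, h0, (hU.sub (hV.comp h0.2.1.measurable)).cb.mono hr.le⟩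

lemma Close.refl {U : ℝ → ℝ → ℝ} : Close 0 U U :=
  ⟨_, IsInvMeasurePreserving.id, fun S T _ _ => by simp⟩

/-- The type of graphons. -/
structure Gr where
  val : ℝ → ℝ → ℝ
  property : IsGraphon val

/-- The pseudometric space of graphons. -/
@[reducible]
noncomputable def graphonPM : PseudoMetricSpace Gr where
  dist U V := cutDist U.1 V.1
  dist_self U := le_antisymm (Close.refl.cutDist_le U.2.bm U.2.bm) (cutDist_nonneg _ _)
  dist_comm U V := by
    have key : ∀ U V : Gr, cutDist U.1 V.1 ≤ cutDist V.1 U.1 := by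
      intro U V
      refine le_of_forall_gt_imp_ge_of_dense fun r hr => ?_
      exact ((close_of_lt V.2.bm U.2.bm hr).symm V.2.bm U.2.bm).cutDist_le U.2.bm V.2.bm
    exact le_antisymm (key _ _) (key _ _)
  dist_triangle U V W := by
    refine le_of_forall_pos_le_add fun r hr => ?_
    have h1 := close_of_lt U.2.bm V.2.bm (lt_add_of_pos_right (cutDist U.1 V.1) (half_pos hr))
    have h2 := close_of_lt V.2.bm W.2.bm (lt_add_of_pos_right (cutDist V.1 W.1) (half_pos hr))
    have := (h1.trans U.2.bm V.2.bm W.2.bm h2).cutDist_le U.2.bm W.2.bm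
    linarith


lemma weak_limit (V : ℕ → ℝ → ℝ → ℝ) (hV : ∀ n, IsGraphon (V n)) (c : ℕ → ℝ)
    (hc : ∀ n m, n ≤ m → CB (fun x y => V n x y - V m x y) (c n)) :
    ∃ L, IsGraphon L ∧ ∀ n, CB (fun x y => V n x y - L x y) (c n) := by
  have hmem : ∀ n, MemLp (fun p : ℝ × ℝ => V n p.1 p.2) 2 π01 := fun n =>
    MemLp.of_bound (hV n).bm.meas.aestronglyMeasurable 1 (ae_of_all _ fun p => by
      rw [Real.norm_eq_abs, abs_of_nonneg ((hV n).2.2 _ _).1]; exact ((hV n).2.2 _ _).2)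
  let v : ℕ → Lp ℝ 2 π01 := fun n => (hmem n).toLp
  have hv : ∀ n, ‖v n‖ ≤ 1 := by
    intro n
    have := Lp.norm_le_of_ae_bound (p := 2) (μ := π01) (f := v n) (C := 1) zero_le_one (by
      filter_upwards [(hmem n).coeFn_toLp] with p hp
      rw [hp, Real.norm_eq_abs, abs_of_nonneg ((hV n).2.2 _ _).1]; exact ((hV n).2.2 _ _).2)
    have h1 : measureUnivNNReal π01 = 1 := by
      simp [measureUnivNNReal]
    simpa [h1] using this
  let d : ℕ → WeakDual ℝ (Lp ℝ 2 π01) := fun n =>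
    StrongDual.toWeakDual (InnerProductSpace.toDual ℝ _ (v n))
  have hcomp := WeakDual.isCompact_closedBall (𝕜 := ℝ) (E := Lp ℝ 2 π01) 0 1
  obtain ⟨x, -, hx⟩ := hcomp.ultrafilter_le_nhds ((hyperfilter ℕ).map d) (by
    rw [Filter.le_principal_iff]
    have : ∀ n, d n ∈ WeakDual.toStrongDual ⁻¹' Metric.closedBall (0 : StrongDual ℝ (Lp ℝ 2 π01)) 1 := by
      intro n
      have e : WeakDual.toStrongDual (d n) = InnerProductSpace.toDual ℝ _ (v n) := rfl
      rw [mem_preimage, e, mem_closedBall_zero_iff, LinearIsometryEquiv.norm_map]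
      exact hv n
    exact Filter.mem_map.2 (Filter.univ_mem' this))
  have hx' : Tendsto d (hyperfilter ℕ) (nhds x) := hx
  let w : Lp ℝ 2 π01 := (InnerProductSpace.toDual ℝ _).symm (WeakDual.toStrongDual x)
  have hlim : ∀ s : Set (ℝ × ℝ), MeasurableSet s →
      Tendsto (fun n => ∫ p in s, V n p.1 p.2 ∂π01) (hyperfilter ℕ) (nhds (∫ p in s, w p ∂π01)) := by
    intro s hs
    let g : Lp ℝ 2 π01 := indicatorConstLp 2 hs (measure_ne_top π01 s) (1:ℝ)
    have h1 : Tendsto (fun n => d n g) (hyperfilter ℕ) (nhds (x g)) :=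
      ((WeakDual.eval_continuous g).tendsto x).comp hx'
    have h2 : x g = ∫ p in s, w p ∂π01 := by
      have : x g = inner ℝ w g := by
        simp [w]
      rw [this, real_inner_comm]
      exact L2.inner_indicatorConstLp_one hs _ w
    have h3 : ∀ n, d n g = ∫ p in s, V n p.1 p.2 ∂π01 := by
      intro n
      have : d n g = inner ℝ (v n) g := by
        simp [d]
      rw [this, real_inner_comm]
      refine (L2.inner_indicatorConstLp_one hs _ (v n)).trans ?_
      exact integral_congr_ae (ae_restrict_of_ae (hmem n).coeFn_toLp)
    rw [← h2]
    exact h1.congr h3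
  have hwi : Integrable w π01 := (Lp.memLp w).integrable (by norm_num)
  have hw0 : 0 ≤ᵐ[π01] w := by
    apply ae_nonneg_of_forall_setIntegral_nonneg hwi
    intro s hs _
    exact ge_of_tendsto (hlim s hs) (Eventually.of_forall fun n =>
      integral_nonneg fun p => ((hV n).2.2 _ _).1)
  have hw1 : w ≤ᵐ[π01] fun _ => (1:ℝ) := by
    apply ae_le_of_forall_setIntegral_le hwi (integrable_const _)
    intro s hs _
    exact le_of_tendsto (hlim s hs) (Eventually.of_forall fun n =>
      integral_mono (hV n).bm.integrable.integrableOn (integrable_const _)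
        fun p => ((hV n).2.2 _ _).2)
  let Q : ℝ → ℝ → ℝ := fun x y => max 0 (min 1 (w (x, y)))
  have hQw : ∀ᵐ p ∂π01, w p = Q p.1 p.2 := by
    filter_upwards [hw0, hw1] with p h0 h1
    simp only [Q]
    rw [min_eq_right h1, max_eq_right (a := (0:ℝ)) h0]
  have hQ0 : ∀ x y, 0 ≤ Q x y := fun x y => le_max_left _ _
  have hQ1 : ∀ x y, Q x y ≤ 1 := fun x y => max_le zero_le_one (min_le_left _ _)
  have hQm : Measurable (fun p : ℝ × ℝ => Q p.1 p.2) :=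
    measurable_const.max (measurable_const.min (Lp.stronglyMeasurable w).measurable)
  have hQ : BM Q := ⟨hQm, 1, fun x y => by rw [abs_of_nonneg (hQ0 x y)]; exact hQ1 x y⟩
  have hQs : BM (fun x y => Q y x) := ⟨hQm.comp measurable_swap, hQ.2.imp fun B h x y => h y x⟩
  have hcQ : ∀ n, CB (fun x y => V n x y - Q x y) (c n) := by
    intro n S T hS hT
    have hl := hlim _ (hS.prod hT)
    rw [integral_congr_ae (ae_restrict_of_ae hQw)] at hl
    rw [integral_sub (hV n).bm.integrable.integrableOn hQ.integrable.integrableOn]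
    refine le_of_tendsto ((hl.const_sub _).abs) ?_
    have : ∀ᶠ m in (hyperfilter ℕ : Filter ℕ), n ≤ m := by
      have := (eventually_ge_atTop n)
      rw [← Nat.cofinite_eq_atTop] at this
      exact Filter.hyperfilter_le_cofinite this
    filter_upwards [this] with m hm
    rw [← integral_sub (hV n).bm.integrable.integrableOn (hV m).bm.integrable.integrableOn]
    exact hc n m hm S T hS hT
  have hcQs : ∀ n, CB (fun x y => V n x y - Q y x) (c n) := by
    intro n S T hS hT
    have := hcQ n T S hT hS
    rw [← setIntegral_prod_swap] at this
    simp only [Prod.fst_swap, Prod.snd_swap] at this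
    have e : (fun p : ℝ × ℝ => V n p.1 p.2 - Q p.2 p.1) = fun p => V n p.2 p.1 - Q p.2 p.1 :=
      funext fun p => by rw [(hV n).2.1]
    rw [e]
    exact this
  refine ⟨fun x y => (Q x y + Q y x) / 2, ⟨?_, fun x y => ?_, fun x y => ⟨?_, ?_⟩⟩, ?_⟩
  · exact (hQm.add hQs.meas).div_const 2
  · exact congrArg (· / 2) (add_comm (Q x y) (Q y x))
  · have := hQ0 x y
    have := hQ0 y x
    positivity
  · have := hQ1 x y
    have := hQ1 y x
    linarith
  · intro n S T hS hT
    have h1 := hcQ n S T hS hT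
    have h2 := hcQs n S T hS hT
    have e : ∫ p in S ×ˢ T, (V n p.1 p.2 - (Q p.1 p.2 + Q p.2 p.1) / 2) ∂π01 =
      ((∫ p in S ×ˢ T, (V n p.1 p.2 - Q p.1 p.2) ∂π01) +
        ∫ p in S ×ˢ T, (V n p.1 p.2 - Q p.2 p.1) ∂π01) / 2 := by
      rw [← integral_add ((hV n).bm.sub hQ).integrable.integrableOn
        ((hV n).bm.sub hQs).integrable.integrableOn, ← integral_div]
      congr 1
      ext p
      ring
    simp only [e]
    rw [abs_le] at *
    constructor <;> linarith

lemma graphon_complete (U : ℕ → ℝ → ℝ → ℝ) (hU : ∀ n, IsGraphon (U n))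
    (h : ∀ n, cutDist (U n) (U (n + 1)) < (1 / 2) ^ n) :
    ∃ L, IsGraphon L ∧ ∀ n, cutDist (U n) L ≤ 2 * (1 / 2) ^ n := by
  choose φ hφ hφc using fun n => close_of_lt (hU n).bm (hU (n + 1)).bm (h n)
  let Φ : ℕ → ℝ → ℝ := fun n => Nat.rec (fun x => x) (fun k f x => φ k (f x)) n
  have hΦs : ∀ n x, Φ (n + 1) x = φ n (Φ n x) := fun n x => rfl
  have hΦ : ∀ n, IsInvMeasurePreserving (Φ n) := by
    intro n
    induction n with
    | zero => exact IsInvMeasurePreserving.id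
    | succ k ih => exact (hφ k).comp ih
  let V : ℕ → ℝ → ℝ → ℝ := fun n x y => U n (Φ n x) (Φ n y)
  have hV : ∀ n, IsGraphon (V n) := fun n => (hU n).comp (hΦ n).2.1.measurable
  have hstep : ∀ n, CB (fun x y => V n x y - V (n + 1) x y) ((1 / 2) ^ n) := fun n =>
    (hφc n).comp ((hU n).bm.sub ((hU (n + 1)).bm.comp (hφ n).2.1.measurable)) (hΦ n)
  have hc' : ∀ n k, CB (fun x y => V n x y - V (n + k) x y)
      (2 * (1 / 2) ^ n - 2 * (1 / 2) ^ (n + k)) := by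
    intro n k
    induction k with
    | zero => intro S T _ _; simp
    | succ k ih =>
      have := ih.trans (hV n).bm (hV _).bm (hV (n + k + 1)).bm (hstep (n + k))
      refine this.mono (le_of_eq ?_)
      rw [← add_assoc, pow_succ]
      ring
  obtain ⟨L, hL, hLc⟩ := weak_limit V hV (fun n => 2 * (1 / 2) ^ n) (by
    intro n m hnm
    obtain ⟨k, rfl⟩ := Nat.exists_eq_add_of_le hnm
    refine (hc' n k).mono ?_
    have : (0:ℝ) < (1 / 2) ^ (n + k) := by positivity
    linarith)
  refine ⟨L, hL, fun n => ?_⟩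
  have h1 : Close 0 (V n) (U n) := ⟨Φ n, hΦ n, fun S T _ _ => by simp [V]⟩
  have h2 : Close (2 * (1 / 2) ^ n) (V n) L := ⟨_, IsInvMeasurePreserving.id, hLc n⟩
  have h3 := (h1.symm (hV n).bm (hU n).bm).trans (hU n).bm (hV n).bm hL.bm h2
  rw [zero_add] at h3
  exact h3.cutDist_le (hU n).bm hL.bm


/-- sign of a boolean -/
def sg (b : Bool) : ℝ := if b then 1 else -1

/-- indicator function -/
noncomputable def ind (S : Set ℝ) (x : ℝ) : ℝ := S.indicator (fun _ => (1:ℝ)) x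

lemma abs_sg (b : Bool) : |sg b| = 1 := by cases b <;> simp [sg]

lemma sg_sq (b : Bool) : sg b * sg b = 1 := by cases b <;> simp [sg]

lemma ind_cases (S : Set ℝ) (x : ℝ) : (x ∈ S ∧ ind S x = 1) ∨ (x ∉ S ∧ ind S x = 0) := by
  by_cases h : x ∈ S <;> simp [ind, h]

lemma measurable_ind {S : Set ℝ} (hS : MeasurableSet S) : Measurable (ind S) :=
  measurable_const.indicator hS

/-- sum of signed rectangles -/
noncomputable def stepK (ε : ℝ) {n : ℕ} (b : Fin n → Bool) (S T : Fin n → Set ℝ) (x y : ℝ) : ℝ :=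
  ε * ∑ i, sg (b i) * (ind (S i) x * ind (T i) y)

lemma bm_rect {S T : Set ℝ} (hS : MeasurableSet S) (hT : MeasurableSet T) :
    BM (fun x y => ind S x * ind T y) := by
  refine ⟨((measurable_ind hS).comp measurable_fst).mul ((measurable_ind hT).comp measurable_snd),
    1, fun x y => ?_⟩
  rcases ind_cases S x with ⟨_, h⟩ | ⟨_, h⟩ <;> rcases ind_cases T y with ⟨_, h'⟩ | ⟨_, h'⟩ <;>
    simp [h, h']

lemma BM.sum {n : ℕ} {U : Fin n → ℝ → ℝ → ℝ} (h : ∀ i, BM (U i)) :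
    BM (fun x y => ∑ i, U i x y) := by
  choose B hB using fun i => (h i).2
  refine ⟨?_, ∑ i, B i, fun x y => ?_⟩
  · exact Finset.measurable_fun_sum _ fun i _ => (h i).meas
  · exact (Finset.abs_sum_le_sum_abs _ _).trans (Finset.sum_le_sum fun i _ => hB i x y)

lemma bm_stepK (ε : ℝ) {n : ℕ} (b : Fin n → Bool) {S T : Fin n → Set ℝ}
    (hS : ∀ i, MeasurableSet (S i)) (hT : ∀ i, MeasurableSet (T i)) : BM (stepK ε b S T) :=
  (BM.const ε).mul (BM.sum fun i => (BM.const _).mul (bm_rect (hS i) (hT i)))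

lemma integral_rect (r : ℝ → ℝ → ℝ) {S T : Set ℝ} (hS : MeasurableSet S)
    (hT : MeasurableSet T) :
    ∫ p, (ind S p.1 * ind T p.2) * r p.1 p.2 ∂π01 = ∫ p in S ×ˢ T, r p.1 p.2 ∂π01 := by
  rw [← integral_indicator (hS.prod hT)]
  congr 1
  ext p
  by_cases h : p ∈ S ×ˢ T
  · rw [indicator_of_mem h]
    have := Set.mem_prod.1 h
    simp [ind, this.1, this.2]
  · rw [indicator_of_notMem h]
    rcases ind_cases S p.1 with ⟨h1, h2⟩ | ⟨_, h2⟩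
    · rcases ind_cases T p.2 with ⟨h3, h4⟩ | ⟨_, h4⟩
      · exact absurd (Set.mem_prod.2 ⟨h1, h3⟩) h
      · simp [h4]
    · simp [h2]

lemma energy_step {r : ℝ → ℝ → ℝ} (hr : BM r) {ε : ℝ} (hε : 0 < ε) (h : ¬ CB r ε) :
    ∃ b S T, MeasurableSet S ∧ MeasurableSet T ∧
      ∫ p, (r p.1 p.2 - ε * (sg b * (ind S p.1 * ind T p.2))) ^ 2 ∂π01 ≤
        (∫ p, (r p.1 p.2) ^ 2 ∂π01) - ε ^ 2 := by
  simp only [CB, not_forall, not_le] at h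
  obtain ⟨S, T, hS, hT, h⟩ := h
  obtain ⟨b, hb⟩ : ∃ b, ε < sg b * ∫ p in S ×ˢ T, r p.1 p.2 ∂π01 := by
    rcases lt_abs.1 h with h | h
    · exact ⟨true, by simpa [sg] using h⟩
    · exact ⟨false, by simpa [sg] using h⟩
  refine ⟨b, S, T, hS, hT, ?_⟩
  have hi := (bm_rect hS hT)
  have i1 : Integrable (fun p : ℝ × ℝ => r p.1 p.2 ^ 2) π01 := by
    simpa only [sq] using (hr.mul hr).integrable
  have i2 : Integrable (fun p : ℝ × ℝ => 2 * ε * sg b * ((ind S p.1 * ind T p.2) * r p.1 p.2)) π01 :=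
    (hi.mul hr).integrable.const_mul _
  have i3 : Integrable (fun _ : ℝ × ℝ => ε ^ 2) π01 := integrable_const _
  have i0 : Integrable (fun p : ℝ × ℝ =>
      (r p.1 p.2 - ε * (sg b * (ind S p.1 * ind T p.2))) ^ 2) π01 := by
    have := hr.sub ((BM.const ε).mul ((BM.const (sg b)).mul hi))
    simpa only [sq] using (this.mul this).integrable
  have hle : ∫ p, (r p.1 p.2 - ε * (sg b * (ind S p.1 * ind T p.2))) ^ 2 ∂π01 ≤
      ∫ p, (r p.1 p.2 ^ 2 - 2 * ε * sg b * ((ind S p.1 * ind T p.2) * r p.1 p.2) + ε ^ 2) ∂π01 := by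
    refine integral_mono i0 ((i1.sub i2).add i3) fun p => ?_
    have h1 : (ind S p.1 * ind T p.2) ^ 2 ≤ 1 := by
      rcases ind_cases S p.1 with ⟨_, h⟩ | ⟨_, h⟩ <;>
        rcases ind_cases T p.2 with ⟨_, h'⟩ | ⟨_, h'⟩ <;> simp [h, h']
    have h2 := sg_sq b
    have h3 : (ε * (sg b * (ind S p.1 * ind T p.2))) ^ 2 ≤ ε ^ 2 := by
      have : (ε * (sg b * (ind S p.1 * ind T p.2))) ^ 2 =
        ε ^ 2 * (sg b * sg b) * (ind S p.1 * ind T p.2) ^ 2 := by ring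
      rw [this, h2, mul_one]
      exact mul_le_of_le_one_right (sq_nonneg _) h1
    simp only
    nlinarith
  refine hle.trans ?_
  have i12 : Integrable (fun p : ℝ × ℝ => r p.1 p.2 ^ 2 -
      2 * ε * sg b * ((ind S p.1 * ind T p.2) * r p.1 p.2)) π01 := i1.sub i2
  rw [integral_add i12 i3, integral_sub i1 i2, integral_const_mul, integral_rect r hS hT]
  simp only [integral_const, probReal_univ, one_smul]
  nlinarith [mul_lt_mul_of_pos_left hb hε]

lemma regularity_aux {W : ℝ → ℝ → ℝ} (hW : IsGraphon W) {ε : ℝ} (hε : 0 < ε) (m : ℕ) :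
    ∃ n, n ≤ m ∧ ∃ (b : Fin n → Bool) (S T : Fin n → Set ℝ), (∀ i, MeasurableSet (S i)) ∧
      (∀ i, MeasurableSet (T i)) ∧ (CB (fun x y => W x y - stepK ε b S T x y) ε ∨
        ∫ p, (W p.1 p.2 - stepK ε b S T p.1 p.2) ^ 2 ∂π01 ≤ 1 - m * ε ^ 2) := by
  induction m with
  | zero =>
    refine ⟨0, le_rfl, Fin.elim0, Fin.elim0, Fin.elim0, fun i => i.elim0, fun i => i.elim0,
      Or.inr ?_⟩
    have i1 : Integrable (fun p : ℝ × ℝ => W p.1 p.2 ^ 2) π01 := by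
      simpa only [sq] using (hW.bm.mul hW.bm).integrable
    have := integral_mono (μ := π01) i1 (integrable_const (1:ℝ)) (fun p => by
      have h0 := (hW.2.2 p.1 p.2)
      simp only
      nlinarith [h0.1, h0.2])
    simpa [stepK] using this
  | succ m ih =>
    obtain ⟨n, hn, b, S, T, hS, hT, h⟩ := ih
    by_cases hc : CB (fun x y => W x y - stepK ε b S T x y) ε
    · exact ⟨n, hn.trans (Nat.le_succ _), b, S, T, hS, hT, Or.inl hc⟩
    · have h := h.resolve_left hc
      obtain ⟨b0, S0, T0, hS0, hT0, he⟩ := energy_step (hW.bm.sub (bm_stepK ε b hS hT)) hε hc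
      refine ⟨n + 1, Nat.succ_le_succ hn, Fin.cons b0 b, Fin.cons S0 S, Fin.cons T0 T, ?_, ?_,
        Or.inr ?_⟩
      · exact fun i => Fin.cases (by simpa using hS0) (fun i => by simpa using hS i) i
      · exact fun i => Fin.cases (by simpa using hT0) (fun i => by simpa using hT i) i
      · have e : ∀ p : ℝ × ℝ, W p.1 p.2 - stepK ε (Fin.cons b0 b : Fin (n + 1) → Bool)
            (Fin.cons S0 S : Fin (n + 1) → Set ℝ) (Fin.cons T0 T : Fin (n + 1) → Set ℝ) p.1 p.2 =
            W p.1 p.2 - stepK ε b S T p.1 p.2 - ε * (sg b0 * (ind S0 p.1 * ind T0 p.2)) := by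
          intro p
          simp only [stepK, Fin.sum_univ_succ, Fin.cons_zero, Fin.cons_succ]
          ring
        simp only [e]
        refine he.trans ?_
        push_cast
        linarith

lemma regularity {W : ℝ → ℝ → ℝ} (hW : IsGraphon W) {ε : ℝ} (hε : 0 < ε) {m : ℕ}
    (hm : 1 < m * ε ^ 2) :
    ∃ n, n ≤ m ∧ ∃ (b : Fin n → Bool) (S T : Fin n → Set ℝ), (∀ i, MeasurableSet (S i)) ∧
      (∀ i, MeasurableSet (T i)) ∧ CB (fun x y => W x y - stepK ε b S T x y) ε := by
  obtain ⟨n, hn, b, S, T, hS, hT, h⟩ := regularity_aux hW hε m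
  refine ⟨n, hn, b, S, T, hS, hT, h.resolve_right fun h => ?_⟩
  have : 0 ≤ ∫ p, (W p.1 p.2 - stepK ε b S T p.1 p.2) ^ 2 ∂π01 :=
    integral_nonneg fun p => sq_nonneg _
  linarith

lemma integral_ind_fst {A : Set ℝ} (hA : MeasurableSet A) :
    ∫ p : ℝ × ℝ, ind A p.1 ∂π01 = μ01.real A := by
  have mp : MeasurePreserving (Prod.fst : ℝ × ℝ → ℝ) π01 μ01 := measurePreserving_fst
  rw [← integral_map (f := ind A) mp.measurable.aemeasurable (measurable_ind hA).aestronglyMeasurable,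
    mp.map_eq]
  exact integral_indicator_one hA

lemma integral_ind_snd {A : Set ℝ} (hA : MeasurableSet A) :
    ∫ p : ℝ × ℝ, ind A p.2 ∂π01 = μ01.real A := by
  have mp : MeasurePreserving (Prod.snd : ℝ × ℝ → ℝ) π01 μ01 := measurePreserving_snd
  rw [← integral_map (f := ind A) mp.measurable.aemeasurable (measurable_ind hA).aestronglyMeasurable,
    mp.map_eq]
  exact integral_indicator_one hA

lemma perturb {ε : ℝ} (hε : 0 < ε) {n : ℕ} (b : Fin n → Bool) {S T S' T' : Fin n → Set ℝ}
    (hS : ∀ i, MeasurableSet (S i)) (hT : ∀ i, MeasurableSet (T i))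
    (hS' : ∀ i, MeasurableSet (S' i)) (hT' : ∀ i, MeasurableSet (T' i)) {δ : ℝ}
    (hSd : ∀ i, μ01.real (symmDiff (S i) (S' i)) ≤ δ)
    (hTd : ∀ i, μ01.real (symmDiff (T i) (T' i)) ≤ δ) :
    CB (fun x y => stepK ε b S T x y - stepK ε b S' T' x y) (ε * (n * (2 * δ))) := by
  have hbm := (bm_stepK ε b hS hT).sub (bm_stepK ε b hS' hT')
  refine hbm.cb_of_abs.mono ?_
  have i1 : ∀ i, Integrable (fun p : ℝ × ℝ => ind (symmDiff (S i) (S' i)) p.1) π01 := fun i => by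
    have := (bm_rect ((hS i).symmDiff (hS' i)) MeasurableSet.univ).integrable
    simpa [ind] using this
  have i2 : ∀ i, Integrable (fun p : ℝ × ℝ => ind (symmDiff (T i) (T' i)) p.2) π01 := fun i => by
    have := (bm_rect MeasurableSet.univ ((hT i).symmDiff (hT' i))).integrable
    simpa [ind] using this
  have i12 : ∀ i, Integrable (fun p : ℝ × ℝ => ind (symmDiff (S i) (S' i)) p.1 +
      ind (symmDiff (T i) (T' i)) p.2) π01 := fun i => (i1 i).add (i2 i)
  have i3 := integrable_finsetSum Finset.univ (fun i _ => i12 i)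
  have hle : ∫ p, |stepK ε b S T p.1 p.2 - stepK ε b S' T' p.1 p.2| ∂π01 ≤
      ∫ p, ε * ∑ i, (ind (symmDiff (S i) (S' i)) p.1 + ind (symmDiff (T i) (T' i)) p.2) ∂π01 := by
    refine integral_mono hbm.integrable.abs (i3.const_mul ε) fun p => ?_
    simp only [stepK, ← mul_sub, ← Finset.sum_sub_distrib]
    rw [abs_mul, abs_of_pos hε]
    refine mul_le_mul_of_nonneg_left ?_ hε.le
    refine (Finset.abs_sum_le_sum_abs _ _).trans (Finset.sum_le_sum fun i _ => ?_)
    rw [abs_mul, abs_sg, one_mul]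
    by_cases h1 : p.1 ∈ S i <;> by_cases h2 : p.1 ∈ S' i <;> by_cases h3 : p.2 ∈ T i <;>
      by_cases h4 : p.2 ∈ T' i <;> simp [ind, h1, h2, h3, h4, Set.mem_symmDiff]
  refine hle.trans ?_
  rw [integral_const_mul]
  refine mul_le_mul_of_nonneg_left ?_ hε.le
  rw [integral_finsetSum _ (fun i _ => i12 i)]
  calc _ ≤ ∑ i : Fin n, 2 * δ := by
        refine Finset.sum_le_sum fun i _ => ?_
        have := integral_add (i1 i) (i2 i)
        rw [this, integral_ind_fst ((hS i).symmDiff (hS' i)),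
          integral_ind_snd ((hT i).symmDiff (hT' i))]
        linarith [hSd i, hTd i]
    _ = _ := by simp


/-- unions of cells of the grid with step `1 / N` -/
def grid (N : ℕ) (A : Set ℤ) : Set ℝ := {x | ⌊(N:ℝ) * x⌋ ∈ A}

lemma measurable_cell (N : ℕ) : Measurable (fun x : ℝ => ⌊(N:ℝ) * x⌋) :=
  Int.measurable_floor.comp (measurable_id.const_mul (N:ℝ))

lemma measurableSet_grid (N : ℕ) (A : Set ℤ) : MeasurableSet (grid N A) :=
  measurable_cell N (MeasurableSet.of_discrete)

lemma grid_refine (N M : ℕ) (hM : 0 < M) (A : Set ℤ) :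
    grid N A = grid (N * M) {k | k / (M:ℤ) ∈ A} := by
  ext x
  simp only [grid, mem_ofPred_eq]
  have hM' : (M:ℝ) ≠ 0 := by positivity
  have : (N:ℝ) * x = ((N * M : ℕ) : ℝ) * x / M := by
    push_cast
    field_simp
  rw [this, Int.floor_div_natCast]

lemma grid_dvd {N N' : ℕ} (hN' : 0 < N') (h : N ∣ N') (A : Set ℤ) : ∃ A', grid N A = grid N' A' := by
  obtain ⟨M, rfl⟩ := h
  exact ⟨_, grid_refine N M (Nat.pos_of_mul_pos_left hN') A⟩

lemma grid_approx {S : Set ℝ} (hS : MeasurableSet S) {δ : ℝ} (hδ : 0 < δ) :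
    ∃ N, 0 < N ∧ ∃ A, μ01.real (symmDiff S (grid N A)) ≤ δ := by
  let 𝒜 : Set (Set ℝ) := {S | ∃ N, 0 < N ∧ ∃ A, S = grid N A}
  have h𝒜 : IsSetAlgebra 𝒜 := by
    constructor
    · exact ⟨1, one_pos, ∅, by simp [grid]⟩
    · rintro _ ⟨N, hN, A, rfl⟩
      exact ⟨N, hN, Aᶜ, rfl⟩
    · rintro _ _ ⟨N, hN, A, rfl⟩ ⟨N', hN', A', rfl⟩
      obtain ⟨B, hB⟩ := grid_dvd (Nat.mul_pos hN hN') (dvd_mul_right N N') A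
      obtain ⟨B', hB'⟩ := grid_dvd (Nat.mul_pos hN hN') (dvd_mul_left N' N) A'
      exact ⟨N * N', Nat.mul_pos hN hN', B ∪ B', by rw [hB, hB']; rfl⟩
  have hgen : Real.measurableSpace = MeasurableSpace.generateFrom 𝒜 := by
    apply le_antisymm
    · have e : Real.measurableSpace = borel ℝ := BorelSpace.measurable_eq
      rw [e, Real.borel_eq_generateFrom_Ici_rat]
      apply MeasurableSpace.generateFrom_mono
      intro s hs
      obtain ⟨q, rfl⟩ := mem_iUnion.1 hs
      refine ⟨q.den, q.pos, {k | q.num ≤ k}, ?_⟩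
      ext x
      simp only [grid, mem_Ici, mem_ofPred_eq, Int.le_floor]
      have hd : (0:ℝ) < q.den := by exact_mod_cast q.pos
      rw [Rat.cast_def, div_le_iff₀ hd, mul_comm]
    · apply MeasurableSpace.generateFrom_le
      rintro _ ⟨N, hN, A, rfl⟩
      exact measurableSet_grid N A
  obtain ⟨t, ⟨N, hN, A, rfl⟩, ht⟩ :=
    (Measure.MeasureDense.of_generateFrom_isSetAlgebra_finite (μ := μ01) h𝒜 hgen).approx S hS
      (measure_ne_top _ _) δ hδ
  refine ⟨N, hN, A, ?_⟩
  exact ENNReal.toReal_le_of_le_ofReal hδ.le ht.le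

lemma grid_approx_fam {n : ℕ} {S : Fin n → Set ℝ} (hS : ∀ i, MeasurableSet (S i)) {δ : ℝ}
    (hδ : 0 < δ) : ∃ N, 0 < N ∧ ∀ N', 0 < N' → N ∣ N' →
      ∃ A : Fin n → Set ℤ, ∀ i, μ01.real (symmDiff (S i) (grid N' (A i))) ≤ δ := by
  choose N hN A hA using fun i => grid_approx (hS i) hδ
  refine ⟨∏ i, N i, Finset.prod_pos fun i _ => hN i, fun N' hN' h => ?_⟩
  choose A' hA' using fun i => grid_dvd hN' ((Finset.dvd_prod_of_mem N (Finset.mem_univ i)).trans h) (A i)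
  exact ⟨A', fun i => by rw [← hA' i]; exact hA i⟩

/-- the map permuting the cells of the grid -/
noncomputable def permMap (N : ℕ) (τ : Equiv.Perm ℤ) (x : ℝ) : ℝ :=
  x + ((τ ⌊(N:ℝ) * x⌋ : ℤ) - (⌊(N:ℝ) * x⌋ : ℤ) : ℝ) / N

lemma floor_permMap {N : ℕ} (hN : 0 < N) (τ : Equiv.Perm ℤ) (x : ℝ) :
    ⌊(N:ℝ) * permMap N τ x⌋ = τ ⌊(N:ℝ) * x⌋ := by
  have hN' : (N:ℝ) ≠ 0 := by positivity
  have : (N:ℝ) * permMap N τ x = N * x + ((τ ⌊(N:ℝ) * x⌋ - ⌊(N:ℝ) * x⌋ : ℤ) : ℝ) := by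
    simp only [permMap]
    push_cast
    field_simp
  rw [this, Int.floor_add_intCast]
  ring

lemma permMap_symm {N : ℕ} (hN : 0 < N) (τ : Equiv.Perm ℤ) (x : ℝ) :
    permMap N τ.symm (permMap N τ x) = x := by
  rw [permMap, floor_permMap hN, Equiv.symm_apply_apply, permMap]
  ring

lemma measurable_permMap (N : ℕ) (τ : Equiv.Perm ℤ) : Measurable (permMap N τ) := by
  have : Measurable (fun k : ℤ => ((τ k : ℤ) - (k : ℤ) : ℝ) / N) := measurable_of_countable _
  exact measurable_id.add (this.comp (measurable_cell N))

lemma volume_cells (N : ℕ) {S : Set ℝ} (hS : MeasurableSet S) :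
    volume S = ∑' k : ℤ, volume (S ∩ grid N {k}) := by
  rw [← measure_iUnion, ← inter_iUnion]
  · congr 1
    symm
    rw [inter_eq_left]
    intro x _
    exact mem_iUnion.2 ⟨⌊(N:ℝ) * x⌋, rfl⟩
  · intro i j hij
    refine Set.disjoint_left.2 fun x hx hx' => hij ?_
    exact hx.2.symm.trans hx'.2
  · exact fun k => hS.inter (measurableSet_grid N _)

lemma mp_permMap {N : ℕ} (hN : 0 < N) (τ : Equiv.Perm ℤ) :
    MeasurePreserving (permMap N τ) volume volume := by
  refine ⟨measurable_permMap N τ, Measure.ext fun S hS => ?_⟩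
  rw [Measure.map_apply (measurable_permMap N τ) hS,
    volume_cells N (measurable_permMap N τ hS), volume_cells N hS,
    ← Equiv.tsum_eq τ (fun k => volume (S ∩ grid N {k}))]
  congr 1
  ext k
  have : permMap N τ ⁻¹' S ∩ grid N {k} =
      (fun x => x + ((τ k : ℤ) - (k : ℤ) : ℝ) / N) ⁻¹' (S ∩ grid N {τ k}) := by
    have hN' : (N:ℝ) ≠ 0 := by positivity
    ext x
    simp only [mem_inter_iff, mem_preimage, grid, mem_ofPred_eq, mem_singleton_iff]
    have h1 : (N:ℝ) * (x + ((τ k : ℤ) - (k : ℤ) : ℝ) / N) = N * x + ((τ k - k : ℤ) : ℝ) := by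
      push_cast
      field_simp
    rw [h1, Int.floor_add_intCast]
    have h2 : ⌊(N:ℝ) * x⌋ + (τ k - k) = τ k ↔ ⌊(N:ℝ) * x⌋ = k := by
      constructor <;> intro h <;> linarith
    rw [h2]
    refine and_congr_left fun h => ?_
    rw [permMap, h]
  rw [this, measure_preimage_add_right]

lemma permMap_maps {N : ℕ} (hN : 0 < N) (τ : Equiv.Perm ℤ)
    (hτ : ∀ k : ℤ, ¬ (0 ≤ k ∧ k < (N:ℤ)) → τ k = k) : MapsTo (permMap N τ) (Icc 0 1) (Icc 0 1) := by
  intro x hx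
  have hN' : (0:ℝ) < N := by positivity
  by_cases h : 0 ≤ ⌊(N:ℝ) * x⌋ ∧ ⌊(N:ℝ) * x⌋ < N
  · have h2 : 0 ≤ τ ⌊(N:ℝ) * x⌋ ∧ τ ⌊(N:ℝ) * x⌋ < N := by
      by_contra hc
      have := hτ _ hc
      rw [τ.injective this] at hc
      exact hc h
    rw [← floor_permMap hN, Int.floor_nonneg, Int.floor_lt] at h2
    constructor
    · exact nonneg_of_mul_nonneg_right h2.1 hN'
    · have := h2.2
      push_cast at this
      nlinarith
  · rw [permMap, hτ _ h]
    simpa using hx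

lemma inv_permMap {N : ℕ} (hN : 0 < N) (τ : Equiv.Perm ℤ)
    (hτ : ∀ k : ℤ, ¬ (0 ≤ k ∧ k < (N:ℤ)) → τ k = k) : IsInvMeasurePreserving (permMap N τ) := by
  have hτ' : ∀ k, ¬ (0 ≤ k ∧ k < (N:ℤ)) → τ.symm k = k := fun k hk => by
    rw [Equiv.symm_apply_eq, hτ k hk]
  have h1 := permMap_maps hN τ hτ
  have h2 := permMap_maps hN τ.symm hτ'
  have l1 := permMap_symm hN τ
  have l2 := permMap_symm hN τ.symm
  simp only [Equiv.symm_symm] at l2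
  have e1 : permMap N τ ⁻¹' Icc 0 1 = Icc 0 1 :=
    Subset.antisymm (fun x hx => by rw [← l1 x]; exact h2 hx) h1
  have e2 : permMap N τ.symm ⁻¹' Icc 0 1 = Icc 0 1 :=
    Subset.antisymm (fun x hx => by rw [← l2 x]; exact h1 hx) h2
  refine ⟨h1, ?_, permMap N τ.symm, h2, ?_, fun x _ => l1 x, fun x _ => l2 x⟩
  · have := (mp_permMap hN τ).restrict_preimage (measurableSet_Icc (a := (0:ℝ)) (b := 1))
    rwa [e1] at this
  · have := (mp_permMap hN τ.symm).restrict_preimage (measurableSet_Icc (a := (0:ℝ)) (b := 1))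
    rwa [e2] at this

/-- the equivalence of `Fin N` with the cells in `[0,1)` -/
def finCells (N : ℕ) : Fin N ≃ {i : ℤ // 0 ≤ i ∧ i < N} where
  toFun a := ⟨a, by omega, by omega⟩
  invFun i := ⟨i.1.toNat, by have := i.2; omega⟩
  left_inv a := by ext; simp
  right_inv i := by ext; simp [i.2.1]

lemma sort_cells {N : ℕ} (hN : 0 < N) (c : ℤ → ℕ) (K : ℕ) (hc : ∀ k, c k ≤ K) :
    ∃ τ : Equiv.Perm ℤ, (∀ k, ¬ (0 ≤ k ∧ k < (N:ℤ)) → τ k = k) ∧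
      ∃ e : ℝ → ℕ, Monotone e ∧ (∀ x, e x ≤ K) ∧
        ∀ x ∈ Ico (0:ℝ) 1, e x = c (τ ⌊(N:ℝ) * x⌋) := by
  classical
  let f : Fin N → ℕ := fun j => c (j : ℤ)
  let σ := Tuple.sort f
  have hσ : Monotone (f ∘ σ) := Tuple.monotone_sort f
  let τ : Equiv.Perm ℤ := σ.extendDomain (finCells N)
  have hτ : ∀ j : Fin N, τ (j : ℤ) = (σ j : ℕ) := fun j =>
    Equiv.Perm.extendDomain_apply_image σ (finCells N) j
  have hN' : (0:ℝ) < N := by positivity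
  have hfl : ∀ x ∈ Ico (0:ℝ) 1, ⌊(N:ℝ) * x⌋.toNat < N ∧ (⌊(N:ℝ) * x⌋.toNat : ℤ) = ⌊(N:ℝ) * x⌋ := by
    intro x hx
    have h0 : 0 ≤ ⌊(N:ℝ) * x⌋ := Int.floor_nonneg.2 (mul_nonneg hN'.le hx.1)
    have h1 : ⌊(N:ℝ) * x⌋ < N := by
      rw [Int.floor_lt]
      push_cast
      nlinarith [hx.2]
    omega
  let e : ℝ → ℕ := fun x => if x < 0 then 0 else
    if h : ⌊(N:ℝ) * x⌋.toNat < N then f (σ ⟨⌊(N:ℝ) * x⌋.toNat, h⟩) else K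
  refine ⟨τ, ?_, e, ?_, ?_, ?_⟩
  · intro k hk
    exact Equiv.Perm.extendDomain_apply_not_subtype σ (finCells N) hk
  · intro x y hxy
    simp only [e]
    split_ifs with h1 h2 h3 h4 h5 h6 h7 h8
    any_goals omega
    · linarith
    · apply hσ
      rw [Fin.mk_le_mk]
      exact Int.toNat_le_toNat (Int.floor_le_floor (mul_le_mul_of_nonneg_left hxy hN'.le))
    · exact hc _
    · linarith
    · exfalso
      have := Int.toNat_le_toNat (Int.floor_le_floor (mul_le_mul_of_nonneg_left hxy hN'.le))
      omega
  · intro x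
    simp only [e]
    split_ifs
    · omega
    · exact hc _
    · exact le_rfl
  · intro x hx
    simp only [e]
    obtain ⟨h1, h2⟩ := hfl x hx
    rw [if_neg (not_lt.2 hx.1), dif_pos h1]
    have := hτ ⟨_, h1⟩
    simp only [h2] at this
    rw [this]

lemma rounding {e : ℝ → ℕ} (he : Monotone e) {K : ℕ} (hK : ∀ x, e x ≤ K) {M : ℕ} (hM : 0 < M)
    {X Y : Set ℝ} (hXY : ∀ x ∈ Ico (0:ℝ) 1, e x = e (⌊(M:ℝ) * x⌋ / M) → (x ∈ X ↔ x ∈ Y)) :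
    μ01.real (symmDiff X Y) ≤ K / M := by
  classical
  have hM' : (0:ℝ) < M := by positivity
  let J := (Finset.range M).filter fun j : ℕ => e ((j:ℝ) / M) < e (((j + 1 : ℕ):ℝ) / M)
  have hsub : symmDiff X Y ∩ Icc 0 1 ⊆ (⋃ j ∈ J, Icc ((j:ℝ) / M) (((j + 1 : ℕ):ℝ) / M)) ∪ {1} := by
    rintro x ⟨hx, hx0, hx1⟩
    rcases hx1.eq_or_lt with h1 | h1
    · exact Or.inr h1
    left
    have hne : e x ≠ e (⌊(M:ℝ) * x⌋ / M) := by
      intro h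
      have := hXY x ⟨hx0, h1⟩ h
      rw [Set.mem_symmDiff] at hx
      tauto
    have hf0 : 0 ≤ ⌊(M:ℝ) * x⌋ := Int.floor_nonneg.2 (mul_nonneg hM'.le hx0)
    obtain ⟨j, hj⟩ := Int.eq_ofNat_of_zero_le hf0
    rw [hj] at hne
    have hjx : (j:ℝ) ≤ M * x := by
      have := Int.floor_le ((M:ℝ) * x)
      rw [hj] at this
      exact_mod_cast this
    have hxj : (M:ℝ) * x < j + 1 := by
      have := Int.lt_floor_add_one ((M:ℝ) * x)
      rw [hj] at this
      exact_mod_cast this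
    have hjM : j < M := by
      have : (j:ℝ) < M := by nlinarith
      exact_mod_cast this
    have a1 : (j:ℝ) / M ≤ x := by rw [div_le_iff₀ hM']; linarith
    have a2 : x ≤ ((j + 1 : ℕ):ℝ) / M := by rw [le_div_iff₀ hM']; push_cast; linarith
    refine mem_iUnion₂.2 ⟨j, ?_, a1, a2⟩
    simp only [J, Finset.mem_filter, Finset.mem_range]
    refine ⟨hjM, ?_⟩
    have b1 := he a1
    have b2 := he a2
    have b3 : e x ≠ e ((j:ℝ) / M) := by simpa using hne
    omega
  have hcard : J.card ≤ K := by
    calc J.card = ∑ j ∈ J, 1 := by simp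
      _ ≤ ∑ j ∈ J, (e (((j + 1 : ℕ):ℝ) / M) - e ((j:ℝ) / M)) := by
          refine Finset.sum_le_sum fun j hj => ?_
          have := (Finset.mem_filter.1 hj).2
          omega
      _ ≤ ∑ j ∈ Finset.range M, (e (((j + 1 : ℕ):ℝ) / M) - e ((j:ℝ) / M)) :=
          Finset.sum_le_sum_of_subset (Finset.filter_subset _ _)
      _ = e ((M:ℝ) / M) - e (((0:ℕ):ℝ) / M) := by
          refine Finset.sum_range_tsub (f := fun j : ℕ => e ((j:ℝ) / M)) ?_ M
          intro i j hij
          apply he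
          gcongr
      _ ≤ K := (Nat.sub_le _ _).trans (hK _)
  have h1 : μ01.real (symmDiff X Y) ≤ volume.real ((⋃ j ∈ J, Icc ((j:ℝ) / M) (((j + 1 : ℕ):ℝ) / M)) ∪ {1}) := by
    have : μ01 (symmDiff X Y) = volume (symmDiff X Y ∩ Icc 0 1) :=
      Measure.restrict_apply' measurableSet_Icc
    rw [Measure.real, this]
    refine measureReal_mono hsub ?_
    refine measure_ne_top_of_subset (?_ : _ ⊆ Icc (0:ℝ) 1) (by simp)
    apply union_subset
    · refine iUnion₂_subset fun j hj => ?_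
      have hjM := Finset.mem_range.1 (Finset.mem_filter.1 hj).1
      intro x hx
      refine ⟨le_trans (by positivity) hx.1, hx.2.trans ?_⟩
      rw [div_le_one hM']
      exact_mod_cast hjM
    · rintro _ rfl
      exact ⟨zero_le_one, le_rfl⟩
  refine h1.trans ((measureReal_union_le _ _).trans ?_)
  have h2 : volume.real ({1} : Set ℝ) = 0 := by simp [Measure.real]
  rw [h2, add_zero]
  refine (measureReal_biUnion_finset_le _ _).trans ?_
  have h3 : ∀ j ∈ J, volume.real (Icc ((j:ℝ) / M) (((j + 1 : ℕ):ℝ) / M)) = 1 / M := by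
    intro j _
    rw [Real.volume_real_Icc_of_le (by gcongr; simp)]
    push_cast
    field_simp
    ring
  rw [Finset.sum_congr rfl h3, Finset.sum_const, nsmul_eq_mul, mul_one_div]
  gcongr


lemma exists_code {n : ℕ} (A B : Fin n → Set ℤ) : ∃ c : ℤ → ℕ, (∀ k, c k ≤ 4 ^ n) ∧
    ∀ k k', c k = c k' → ∀ i, (k ∈ A i ↔ k' ∈ A i) ∧ (k ∈ B i ↔ k' ∈ B i) := by
  classical
  let E := Fintype.equivFin (Fin n → Bool × Bool)
  have hcard : Fintype.card (Fin n → Bool × Bool) = 4 ^ n := by simp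
  refine ⟨fun k => (E fun i => (decide (k ∈ A i), decide (k ∈ B i))).val, fun k => ?_, ?_⟩
  · have := (E fun i => (decide (k ∈ A i), decide (k ∈ B i))).isLt
    exact (lt_of_lt_of_eq this hcard).le
  · intro k k' h i
    have h1 := congrFun (E.injective (Fin.ext h)) i
    simp only [Prod.mk.injEq, decide_eq_decide] at h1
    exact h1

lemma round_net {ε : ℝ} (hε : 0 < ε) {W : ℝ → ℝ → ℝ} (hW : BM W) {N n m M : ℕ} (hN : 0 < N)
    (hn : n ≤ m) (hM : 0 < M) (b : Fin n → Bool) (A B : Fin n → Set ℤ) {η : ℝ}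
    (h : CB (fun x y => W x y - stepK ε b (fun i => grid N (A i)) (fun i => grid N (B i)) x y) η) :
    ∃ φ, IsInvMeasurePreserving φ ∧ ∃ A' B' : Fin n → Set (Fin M),
      CB (fun x y => W (φ x) (φ y) -
        stepK ε b (fun i => grid M ((fun j : Fin M => ((j : ℕ) : ℤ)) '' A' i))
          (fun i => grid M ((fun j : Fin M => ((j : ℕ) : ℤ)) '' B' i)) x y)
        (η + ε * (n * (2 * ((4 ^ m : ℕ) / M)))) := by
  obtain ⟨c, hcK, hc⟩ := exists_code A B
  obtain ⟨τ, hτ, e, he, heK, hec⟩ := sort_cells hN c (4 ^ m) fun k =>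
    (hcK k).trans (Nat.pow_le_pow_right (by norm_num) hn)
  have hφ := inv_permMap hN τ hτ
  have hM' : (0:ℝ) < M := by positivity
  have key : ∀ A : Set ℤ, (∀ k k', c k = c k' → (k ∈ A ↔ k' ∈ A)) →
      μ01.real (symmDiff (permMap N τ ⁻¹' grid N A) (grid M ((fun j : Fin M => ((j : ℕ) : ℤ)) ''
        {j : Fin M | ∃ k, c k = e ((j:ℕ) / M) ∧ k ∈ A}))) ≤ (4 ^ m : ℕ) / M := by
    intro A hA
    refine rounding he heK hM fun x hx hxe => ?_
    have h0 : 0 ≤ ⌊(M:ℝ) * x⌋ := Int.floor_nonneg.2 (mul_nonneg hM'.le hx.1)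
    have h1 : ⌊(M:ℝ) * x⌋ < M := by
      rw [Int.floor_lt]
      push_cast
      nlinarith [hx.2]
    obtain ⟨j, hj⟩ := Int.eq_ofNat_of_zero_le h0
    have hjM : j < M := by omega
    have hxe' : c (τ ⌊(N:ℝ) * x⌋) = e ((j:ℝ) / M) := by
      rw [← hec x hx, hxe, hj]
      simp
    have l1 : x ∈ permMap N τ ⁻¹' grid N A ↔ τ ⌊(N:ℝ) * x⌋ ∈ A := by
      rw [← floor_permMap hN]
      rfl
    have l2 : (x ∈ grid M ((fun j : Fin M => ((j : ℕ) : ℤ)) ''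
        {j : Fin M | ∃ k, c k = e ((j:ℕ) / M) ∧ k ∈ A})) ↔ ∃ k, c k = e ((j:ℝ) / M) ∧ k ∈ A := by
      constructor
      · rintro ⟨j', hj', hjj⟩
        have : (j' : ℕ) = j := by
          have h3 : ((j' : ℕ) : ℤ) = ⌊(M:ℝ) * x⌋ := hjj
          omega
        rw [← this]
        exact hj'
      · intro hk
        exact ⟨⟨j, hjM⟩, hk, hj.symm⟩
    rw [l1, l2]
    constructor
    · intro hk
      exact ⟨_, hxe', hk⟩
    · rintro ⟨k, hk, hkA⟩
      exact (hA _ _ (hk.trans hxe'.symm)).1 hkA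
  refine ⟨permMap N τ, hφ, fun i => {j : Fin M | ∃ k, c k = e ((j:ℕ) / M) ∧ k ∈ A i},
    fun i => {j : Fin M | ∃ k, c k = e ((j:ℕ) / M) ∧ k ∈ B i}, ?_⟩
  have hm := measurable_permMap N τ
  have mg := measurableSet_grid
  have h1 := h.comp (hW.sub (bm_stepK ε b (fun i => mg N (A i)) (fun i => mg N (B i)))) hφ
  have h2 := perturb hε b (S := fun i => permMap N τ ⁻¹' grid N (A i))
    (T := fun i => permMap N τ ⁻¹' grid N (B i)) (fun i => hm (mg _ _)) (fun i => hm (mg _ _))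
    (fun i => mg _ _) (fun i => mg _ _) (fun i => key (A i) fun k k' h => (hc k k' h i).1)
    (fun i => key (B i) fun k k' h => (hc k k' h i).2)
  exact CB.trans (hW.comp hm) (bm_stepK ε b (fun i => hm (mg _ _)) (fun i => hm (mg _ _)))
    (bm_stepK ε b (fun i => mg _ _) (fun i => mg _ _)) h1 h2

lemma exists_net {ε : ℝ} (hε : 0 < ε) : ∃ (D : Type) (_ : Fintype D) (U : D → ℝ → ℝ → ℝ),
    (∀ d, BM (U d)) ∧ ∀ W, IsGraphon W → ∃ d, ∃ φ, IsInvMeasurePreserving φ ∧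
      CB (fun x y => W (φ x) (φ y) - U d x y) (3 * ε) := by
  classical
  obtain ⟨m, hm⟩ := exists_nat_gt (1 / ε ^ 2)
  have hm1 : 1 < m * ε ^ 2 := by rwa [div_lt_iff₀ (by positivity)] at hm
  have hm0 : 0 < m := by
    rcases Nat.eq_zero_or_pos m with h | h
    · subst h; norm_num at hm1
    · exact h
  have hm0' : (0:ℝ) < m := by positivity
  let M := 2 * m * 4 ^ m
  have hM : 0 < M := by positivity
  have mg := measurableSet_grid
  refine ⟨Σ n : Fin (m + 1), (Fin n → Bool) × (Fin n → Set (Fin M)) × (Fin n → Set (Fin M)),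
    inferInstance, fun d => stepK ε d.2.1
      (fun i => grid M ((fun j : Fin M => ((j : ℕ) : ℤ)) '' d.2.2.1 i))
      (fun i => grid M ((fun j : Fin M => ((j : ℕ) : ℤ)) '' d.2.2.2 i)),
    fun d => bm_stepK ε _ (fun i => mg _ _) (fun i => mg _ _), fun W hW => ?_⟩
  obtain ⟨n, hn, b, S, T, hS, hT, h⟩ := regularity hW hε hm1
  have hδ : (0:ℝ) < 1 / (2 * m) := by positivity
  obtain ⟨N1, hN1, h1⟩ := grid_approx_fam hS hδ
  obtain ⟨N2, hN2, h2⟩ := grid_approx_fam hT hδ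
  have hN : 0 < N1 * N2 := Nat.mul_pos hN1 hN2
  obtain ⟨A, hA⟩ := h1 _ hN (dvd_mul_right _ _)
  obtain ⟨B, hB⟩ := h2 _ hN (dvd_mul_left _ _)
  have h3 := CB.trans hW.bm (bm_stepK ε b hS hT) (bm_stepK ε b (fun i => mg _ _) (fun i => mg _ _))
    h (perturb hε b hS hT (fun i => mg _ _) (fun i => mg _ _) hA hB)
  obtain ⟨φ, hφ, A', B', hc⟩ := round_net hε hW.bm hN hn hM b A B h3
  refine ⟨⟨⟨n, Nat.lt_succ_of_le hn⟩, b, A', B'⟩, φ, hφ, hc.mono ?_⟩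
  have hn' : (n:ℝ) ≤ m := by exact_mod_cast hn
  have e1 : (n:ℝ) * (2 * (1 / (2 * m))) ≤ 1 := by
    have : (n:ℝ) * (2 * (1 / (2 * m))) = n / m := by field_simp
    rw [this, div_le_one hm0']
    exact hn'
  have e2 : (n:ℝ) * (2 * ((4 ^ m : ℕ) / M)) ≤ 1 := by
    have : (n:ℝ) * (2 * ((4 ^ m : ℕ) / M)) = n / m := by
      simp only [M]
      push_cast
      field_simp
    rw [this, div_le_one hm0']
    exact hn'
  nlinarith

/-- Compactness of the space of graphons with the cut distance: every sequence of
graphons has a subsequence converging to some graphon in cut distance. -/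
theorem graphon_space_compact (W : ℕ → ℝ → ℝ → ℝ) (hW : ∀ n, IsGraphon (W n)) :
    ∃ φ : ℕ → ℕ, StrictMono φ ∧ ∃ L : ℝ → ℝ → ℝ, IsGraphon L ∧
      Filter.Tendsto (fun j => cutDist (W (φ j)) L) Filter.atTop (nhds 0) := by
  letI : PseudoMetricSpace Gr := graphonPM
  have hdist : ∀ U V : Gr, dist U V = cutDist U.1 V.1 :=
    fun _ _ => rfl
  have hcomplete : CompleteSpace Gr := by
    refine Metric.complete_of_convergent_controlled_sequences (α := Gr) (fun n => (1 / 2) ^ n)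
      (fun n => by positivity) fun u hu => ?_
    obtain ⟨L, hL, hlim⟩ := graphon_complete (fun n => (u n).1) (fun n => (u n).2)
      (fun n => hu n n (n + 1) le_rfl (Nat.le_succ n))
    refine ⟨⟨L, hL⟩, tendsto_iff_dist_tendsto_zero.2 ?_⟩
    refine squeeze_zero (fun n => dist_nonneg) (fun n => hlim n) ?_
    have := (tendsto_pow_atTop_nhds_zero_of_lt_one (r := (1 / 2 : ℝ)) (by norm_num)
      (by norm_num)).const_mul 2
    simpa using this
  have htb : TotallyBounded (univ : Set Gr) := by
    refine Metric.totallyBounded_of_finite_discretization fun ε hε => ?_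
    obtain ⟨D, hD, U, hU, hnet⟩ := exists_net (ε := ε / 7) (by positivity)
    choose F φ hφ hc using hnet
    refine ⟨D, hD, fun x => F x.1.1 x.1.2, fun x y => ?_⟩
    obtain ⟨⟨x, hx⟩, -⟩ := x
    obtain ⟨⟨y, hy⟩, -⟩ := y
    intro hxy
    replace hxy : F x hx = F y hy := hxy
    have c1 := hc x hx
    have c2 := hc y hy
    rw [hxy] at c1
    have bx := hx.comp (hφ x hx).2.1.measurable
    have hy' := hy.comp (hφ y hy).2.1.measurable
    have a1 : Close 0 (fun a b => x (φ x hx a) (φ x hx b)) x :=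
      ⟨φ x hx, hφ x hx, fun S T _ _ => by simp⟩
    have a2 : Close (3 * (ε / 7) + 3 * (ε / 7)) (fun a b => x (φ x hx a) (φ x hx b)) y :=
      ⟨φ y hy, hφ y hy, c1.trans bx.bm (hU _) hy'.bm c2.symm⟩
    have a3 := ((a1.symm bx.bm hx.bm).trans hx.bm bx.bm hy.bm a2).cutDist_le hx.bm hy.bm
    calc dist _ _ = cutDist x y := rfl
      _ ≤ _ := a3
      _ < ε := by linarith
  have hcpt : IsCompact (univ : Set Gr) :=
    isCompact_iff_totallyBounded_isComplete.2 ⟨htb, isComplete_univ⟩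
  obtain ⟨L, -, φ, hφ, hlim⟩ := hcpt.tendsto_subseq (x := fun n => ⟨W n, hW n⟩) fun n => mem_univ _
  exact ⟨φ, hφ, L.1, L.2, tendsto_iff_dist_tendsto_zero.1 hlim⟩
end
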